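/- arXiv:1409.1644 — 2 statements merged into one kernel-verified Lean document; each statement's English description precedes it below -/
import Mathlib

section
/- Let H be a Hopf algebra over an algebraically closed field F, and let B be a domain over F satisfying a polynomial identity which admits an inner faithful H-action. Then the H-action extends to an inner faithful action of H on the quotient division algebra Q_B of B. -/
open TensorProduct

/-- An action of a (bi/Hopf) algebra `H` on an algebra `A`, where the comultiplication and
counit of `H` are supplied explicitly as `comul` and `counit`.  This says exactly that `A`
is an `H`-module algebra:  `h ⬝ (ab) = ∑ (h₁ ⬝ a)(h₂ ⬝ b)` and `h ⬝ 1 = ε(h) 1`. -/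
structure ModAlgAction (k : Type) [CommRing k] (H : Type) [Ring H] [Module k H]
    (comul : H →ₗ[k] H ⊗[k] H) (counit : H →ₗ[k] k)
    (A : Type) [Ring A] [Algebra k A] where
  /-- the action map -/
  act : H →ₗ[k] A →ₗ[k] A
  one_act : ∀ a : A, act 1 a = a
  mul_act : ∀ (g h : H) (a : A), act (g * h) a = act g (act h a)
  act_one : ∀ h : H, act h 1 = algebraMap k A (counit h)
  act_mul : ∀ (h : H) (a b : A), act h (a * b) =
    TensorProduct.lift (((LinearMap.mul k A).comp (act.flip a)).compl₂ (act.flip b)) (comul h)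

/-- An action of a Hopf algebra `H` on an algebra `A`, i.e. an `H`-module algebra
structure on `A`. -/
abbrev HopfAction (k : Type) [CommRing k] (H : Type) [Ring H] [Bialgebra k H]
    (A : Type) [Ring A] [Algebra k A] :=
  ModAlgAction k H (Coalgebra.comul (R := k)) (Coalgebra.counit (R := k)) A

/-- The `k`-subspace `I ⊗ H + H ⊗ I` of `H ⊗ H` determined by a subspace `I ⊆ H`. -/
noncomputable def tensorIdeal (k : Type) [CommRing k] (H : Type) [Ring H] [Module k H]
    (I : Submodule k H) : Submodule k (H ⊗[k] H) :=
  Submodule.span k {z : H ⊗[k] H |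
    (∃ a ∈ I, ∃ b : H, z = a ⊗ₜ[k] b) ∨ (∃ a : H, ∃ b ∈ I, z = a ⊗ₜ[k] b)}

/-- A (two-sided) Hopf ideal of `H`, with respect to explicitly supplied comultiplication,
counit and antipode. -/
def IsHopfIdealWith (k : Type) [CommRing k] (H : Type) [Ring H] [Module k H]
    (comul : H →ₗ[k] H ⊗[k] H) (counit : H →ₗ[k] k) (antipode : H →ₗ[k] H)
    (I : Submodule k H) : Prop :=
  (∀ x ∈ I, ∀ h : H, h * x ∈ I ∧ x * h ∈ I) ∧
  (∀ x ∈ I, comul x ∈ tensorIdeal k H I) ∧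
  (∀ x ∈ I, counit x = 0) ∧
  (∀ x ∈ I, antipode x ∈ I)

/-- A Hopf ideal of a Hopf algebra `H`. -/
abbrev IsHopfIdeal (k : Type) [CommRing k] (H : Type) [Ring H] [HopfAlgebra k H]
    (I : Submodule k H) : Prop :=
  IsHopfIdealWith k H (Coalgebra.comul (R := k)) (Coalgebra.counit (R := k))
    (HopfAlgebra.antipode (R := k)) I

/-- Inner faithfulness of an action map `act`: no nonzero Hopf ideal annihilates `A`. -/
def InnerFaithfulWith (k : Type) [CommRing k] (H : Type) [Ring H] [Module k H]
    (comul : H →ₗ[k] H ⊗[k] H) (counit : H →ₗ[k] k) (antipode : H →ₗ[k] H)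
    (A : Type) [Ring A] [Algebra k A] (act : H →ₗ[k] A →ₗ[k] A) : Prop :=
  ∀ I : Submodule k H, IsHopfIdealWith k H comul counit antipode I →
    (∀ x ∈ I, ∀ a : A, act x a = 0) → I = ⊥

/-- Inner faithfulness of a Hopf algebra action: no nonzero Hopf ideal of `H` acts by zero. -/
abbrev HopfAction.InnerFaithful {k : Type} [CommRing k] {H : Type} [Ring H] [HopfAlgebra k H]
    {A : Type} [Ring A] [Algebra k A] (ha : HopfAction k H A) : Prop :=
  InnerFaithfulWith k H (Coalgebra.comul (R := k)) (Coalgebra.counit (R := k))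
    (HopfAlgebra.antipode (R := k)) A ha.act

/-- The set of invariants of an action. -/
def ModAlgAction.invariants {k : Type} [CommRing k] {H : Type} [Ring H] [Module k H]
    {comul : H →ₗ[k] H ⊗[k] H} {counit : H →ₗ[k] k}
    {A : Type} [Ring A] [Algebra k A] (ha : ModAlgAction k H comul counit A) : Set A :=
  {a : A | ∀ h : H, ha.act h a = counit h • a}

/-- The kernel of an action, as a subspace of `H`. -/
noncomputable def ModAlgAction.actionKernel {k : Type} [CommRing k] {H : Type} [Ring H]
    [Module k H] {comul : H →ₗ[k] H ⊗[k] H} {counit : H →ₗ[k] k}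
    {A : Type} [Ring A] [Algebra k A] (ha : ModAlgAction k H comul counit A) :
    Submodule k H :=
  ⨅ a : A, LinearMap.ker (ha.act.flip a)

/-- `B` satisfies a polynomial identity over `F`: some nonzero noncommutative polynomial
in finitely many variables vanishes identically on `B`. -/
def IsPIAlgebra (F : Type) [CommRing F] (B : Type) [Ring B] [Algebra F B] : Prop :=
  ∃ (m : ℕ) (f : FreeAlgebra F (Fin m)), f ≠ 0 ∧
    ∀ v : Fin m → B, FreeAlgebra.lift F v f = 0


theorem hx_coideal1 {F H : Type} [Field F] [AddCommGroup H] [Module F H] [Coalgebra F H] (h : H) :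
    ∃ V : Submodule F H, FiniteDimensional F V ∧ h ∈ V ∧
      ∀ v ∈ V, (Coalgebra.comul (R := F) v) ∈ LinearMap.range (V.subtype.lTensor H) := by
  classical
  let b := Module.Basis.ofVectorSpace F H
  obtain ⟨c, hc⟩ := TensorProduct.eq_repr_basis_left b (Coalgebra.comul (R := F) h)
  have hcV : ∀ y ∈ c.support, c y ∈ Submodule.span F (c '' c.support : Set H) := fun y hy =>
    Submodule.subset_span ⟨y, hy, rfl⟩
  refine ⟨Submodule.span F (c '' c.support), ?_, ?_, ?_⟩
  · exact FiniteDimensional.span_of_finite F (c.support.finite_toSet.image _)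
  · have := Coalgebra.rTensor_counit_comul (R := F) h
    rw [← hc] at this
    have h2 := congrArg (TensorProduct.lid F H) this
    simp [Finsupp.sum] at h2
    rw [← h2]
    exact Submodule.sum_mem _ fun y hy => Submodule.smul_mem _ _ (hcV y hy)
  · intro v hv
    induction hv using Submodule.span_induction with
    | zero => simp
    | add x y _ _ hx hy => rw [map_add]; exact Submodule.add_mem _ hx hy
    | smul r x _ hx => rw [map_smul]; exact Submodule.smul_mem _ _ hx
    | mem x hx =>
      obtain ⟨x, hx, rfl⟩ := hx
      have key := Coalgebra.coassoc_apply (R := F) h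
      rw [← hc] at key
      have h2 := congrArg (TensorProduct.lid F (H ⊗[F] H)) (congrArg ((b.coord x).rTensor (H ⊗[F] H)) key)
      simp only [Finsupp.sum, map_sum, LinearMap.lTensor_tmul, LinearMap.rTensor_tmul,
        TensorProduct.lid_tmul, Module.Basis.coord_apply, Module.Basis.repr_self] at h2
      have h3 : ∑ i ∈ c.support, ((Finsupp.single i (1:F)) x) • Coalgebra.comul (R := F) (c i) =
        Coalgebra.comul (R := F) (c x) := by
        rw [Finset.sum_eq_single x]
        · simp
        · intro y _ hy; simp [hy]
        · intro h; exact absurd hx h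
      rw [h3] at h2
      rw [← h2]
      refine Submodule.sum_mem _ fun y hy => ?_
      generalize Coalgebra.comul (R := F) (b y) = t
      induction t with
      | zero => simp
      | add p q hp hq => rw [TensorProduct.add_tmul, map_add, map_add, map_add]
                         exact Submodule.add_mem _ hp hq
      | tmul p q =>
        refine ⟨(b.repr p x) • (q ⊗ₜ ⟨c y, hcV y hy⟩), ?_⟩
        simp

theorem hx_coideal2 {F H : Type} [Field F] [AddCommGroup H] [Module F H] [Coalgebra F H] (s : Finset H) :
    ∃ V : Submodule F H, FiniteDimensional F V ∧ (∀ h ∈ s, h ∈ V) ∧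
      ∀ v ∈ V, (Coalgebra.comul (R := F) v) ∈ LinearMap.range (V.subtype.lTensor H) := by
  classical
  have mono : ∀ V W : Submodule F H, V ≤ W →
      LinearMap.range (V.subtype.lTensor H) ≤ LinearMap.range (W.subtype.lTensor H) := by
    rintro V W h _ ⟨t, rfl⟩
    refine ⟨(Submodule.inclusion h).lTensor H t, ?_⟩
    rw [← LinearMap.comp_apply, ← LinearMap.lTensor_comp]
    rfl
  induction s using Finset.induction_on with
  | empty => exact ⟨⊥, inferInstance, by simp, fun v hv => by
      rw [(Submodule.mem_bot F).1 hv, map_zero]; exact Submodule.zero_mem _⟩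
  | insert a s _ ih =>
    obtain ⟨V, h1, h2, h3⟩ := ih
    obtain ⟨W, k1, k2, k3⟩ := hx_coideal1 (F := F) a
    refine ⟨V ⊔ W, inferInstance, ?_, ?_⟩
    · intro h hh
      rcases Finset.mem_insert.1 hh with rfl | hh
      · exact Submodule.mem_sup_right k2
      · exact Submodule.mem_sup_left (h2 h hh)
    · intro v hv
      obtain ⟨x, hx, y, hy, rfl⟩ := Submodule.mem_sup.1 hv
      rw [map_add]
      exact Submodule.add_mem _ (mono _ _ le_sup_left (h3 x hx)) (mono _ _ le_sup_right (k3 y hy))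

theorem hx_comatrix {F H : Type} [Field F] [AddCommGroup H] [Module F H] [Coalgebra F H] (s : Finset H) :
    ∃ (n : ℕ) (w : Fin n → H) (a : Fin n → Fin n → H), LinearIndependent F w ∧
      (∀ h ∈ s, h ∈ Submodule.span F (Set.range w)) ∧
      (∀ i, Coalgebra.comul (R := F) (w i) = ∑ j, a i j ⊗ₜ[F] w j) ∧
      (∀ i j, Coalgebra.comul (R := F) (a i j) = ∑ k, a i k ⊗ₜ[F] a k j) ∧
      (∀ i j, Coalgebra.counit (R := F) (a i j) = if i = j then 1 else 0) := by
  classical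
  obtain ⟨V, h1, h2, h3⟩ := hx_coideal2 (F := F) s
  let b := Module.finBasis F V
  have hw : LinearIndependent F (fun i => (b i : H)) :=
    b.linearIndependent.map' V.subtype V.ker_subtype
  have ha : ∀ i, ∃ a : Fin _ → H, Coalgebra.comul (R := F) (b i : H) = ∑ j, a j ⊗ₜ[F] (b j : H) := by
    intro i
    obtain ⟨t, ht⟩ := h3 (b i) (b i).2
    obtain ⟨c, hc⟩ := TensorProduct.eq_repr_basis_right b t
    refine ⟨c, ?_⟩
    rw [← ht, ← hc, Finsupp.sum_fintype _ _ (by simp)]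
    simp
  choose a ha using ha
  -- dual functionals
  have hd : ∀ j, ∃ φ : H →ₗ[F] F, ∀ i, φ (b i) = if i = j then 1 else 0 := by
    intro j
    obtain ⟨φ, hφ⟩ := LinearMap.exists_extend (b.coord j)
    refine ⟨φ, fun i => ?_⟩
    have := LinearMap.congr_fun hφ (b i)
    simp [Finsupp.single_apply] at this
    exact this
  choose φ hφ using hd
  refine ⟨_, fun i => (b i : H), a, hw, ?_, ha, ?_, ?_⟩
  · intro h hh
    have := b.mem_span ⟨h, h2 h hh⟩
    have h4 := Submodule.mem_map_of_mem (f := V.subtype) this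
    rw [Submodule.map_span, ← Set.range_comp] at h4
    exact h4
  · intro i j
    have key := Coalgebra.coassoc_apply (R := F) (b i : H)
    rw [ha i] at key
    simp only [map_sum, LinearMap.rTensor_tmul, LinearMap.lTensor_tmul, ha, TensorProduct.tmul_sum] at key
    have k2 := congrArg (TensorProduct.assoc F H H H).symm key
    simp only [map_sum, LinearEquiv.symm_apply_apply, TensorProduct.assoc_symm_tmul] at k2
    have k3 := congrArg (TensorProduct.rid F (H ⊗[F] H)) (congrArg ((φ j).lTensor (H ⊗[F] H)) k2)
    simpa [hφ] using k3
  · intro i j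
    have key := Coalgebra.rTensor_counit_comul (R := F) (b i : H)
    rw [ha i] at key
    have k2 := congrArg (φ j) (congrArg (TensorProduct.lid F H) key)
    simpa [hφ] using k2

theorem hx_regular {F H B : Type} [Field F] [Ring H] [HopfAlgebra F H] [Ring B] [Algebra F B]
    [IsDomain B] (ha : HopfAction F H B) {n : ℕ} (a : Fin n → Fin n → H)
    (hΔ : ∀ i j, Coalgebra.comul (R := F) (a i j) = ∑ k, a i k ⊗ₜ[F] a k j)
    (hε : ∀ i j, Coalgebra.counit (R := F) (a i j) = if i = j then 1 else 0)
    (z : B) (hz : z ≠ 0) (y : Fin n → B) (hy : ∀ i, ∑ j, ha.act (a i j) z * y j = 0) : y = 0 := by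
  classical
  have hS1 : ∀ i j, ∑ k, HopfAlgebra.antipode F (a i k) * a k j = if i = j then 1 else 0 := by
    intro i j
    have := HopfAlgebra.mul_antipode_rTensor_comul_apply (R := F) (a i j)
    rw [hΔ, hε] at this
    simp only [map_sum, LinearMap.rTensor_tmul, LinearMap.mul'_apply] at this
    rw [this]; split_ifs <;> simp
  have hS2 : ∀ i j, ∑ k, a i k * HopfAlgebra.antipode F (a k j) = if i = j then 1 else 0 := by
    intro i j
    have := HopfAlgebra.mul_antipode_lTensor_comul_apply (R := F) (a i j)
    rw [hΔ, hε] at this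
    simp only [map_sum, LinearMap.lTensor_tmul, LinearMap.mul'_apply] at this
    rw [this]; split_ifs <;> simp
  let w : Fin n → B := fun k => ∑ j, ha.act (HopfAlgebra.antipode F (a k j)) (y j)
  have hw : ∀ l, ∑ k, ha.act (a l k) (w k) = y l := by
    intro l
    simp only [w, map_sum, ← ha.mul_act]
    rw [Finset.sum_comm]
    simp only [← LinearMap.sum_apply, ← map_sum, hS2]
    rw [Finset.sum_eq_single l]
    · simp [ha.one_act]
    · intro b _ hb; simp [Ne.symm hb]
    · simp
  have h1 : ∀ i, ∑ k, ha.act (a i k) (z * w k) = 0 := by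
    intro i
    rw [← hy i]
    simp only [ha.act_mul, hΔ, map_sum]
    rw [Finset.sum_comm]
    refine Finset.sum_congr rfl fun j _ => ?_
    rw [← hw j, Finset.mul_sum]
    simp
  have h2 : ∀ l, z * w l = 0 := by
    intro l
    have : ∑ i, ha.act (HopfAlgebra.antipode F (a l i)) (∑ k, ha.act (a i k) (z * w k)) = z * w l := by
      simp only [map_sum, ← ha.mul_act]
      rw [Finset.sum_comm]
      simp only [← LinearMap.sum_apply, ← map_sum, hS1]
      rw [Finset.sum_eq_single l]
      · simp [ha.one_act]
      · intro b _ hb; simp [Ne.symm hb]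
      · simp
    rw [← this]; simp [h1]
  have h3 : ∀ l, w l = 0 := fun l => (mul_eq_zero.1 (h2 l)).resolve_left hz
  funext l
  rw [← hw l]; simp [h3]

theorem hx_denom {B Q : Type} [Ring B] [DivisionRing Q] [IsDomain B]
    (ι : B →+* Q) (hinj : Function.Injective ι)
    (hfrac : ∀ q : Q, ∃ a b : B, b ≠ 0 ∧ q = ι a * (ι b)⁻¹) {X : Type} (s : Finset X) (x : X → Q) :
    ∃ b : B, b ≠ 0 ∧ ∀ j ∈ s, ∃ y, x j * ι b = ι y := by
  classical
  have hne : ∀ b : B, b ≠ 0 → ι b ≠ 0 := fun b hb => (map_ne_zero_iff ι hinj).2 hb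
  induction s using Finset.induction_on with
  | empty => exact ⟨1, one_ne_zero, by simp⟩
  | insert i s _ ih =>
    obtain ⟨b, hb, ih⟩ := ih
    obtain ⟨c, d, hd, hcd⟩ := hfrac (x i * ι b)
    refine ⟨b * d, mul_ne_zero hb hd, ?_⟩
    intro j hj
    rcases Finset.mem_insert.1 hj with rfl | hj
    · refine ⟨c, ?_⟩
      rw [map_mul, ← mul_assoc, hcd, mul_assoc, inv_mul_cancel₀ (hne d hd), mul_one]
    · obtain ⟨y, hy⟩ := ih j hj
      exact ⟨y * d, by rw [map_mul, ← mul_assoc, hy, map_mul]⟩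

theorem hx_surj {Q : Type} [DivisionRing Q] {n : ℕ} (M : Fin n → Fin n → Q)
    (hM : ∀ x : Fin n → Q, (∀ i, ∑ j, M i j * x j = 0) → x = 0) :
    ∃ N : Fin n → Fin n → Q, ∀ i k, ∑ j, M i j * N j k = if i = k then 1 else 0 := by
  classical
  let L : (Fin n → Q) →ₗ[Qᵐᵒᵖ] (Fin n → Q) :=
    { toFun := fun x i => ∑ j, M i j * x j
      map_add' := by intro x y; funext i; simp [mul_add, Finset.sum_add_distrib]
      map_smul' := by intro c x; funext i; simp [Finset.sum_mul, mul_assoc] }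
  have : Module.Finite Qᵐᵒᵖ Q := ⟨⟨{1}, by
    rw [eq_top_iff]; intro q _
    rw [Finset.coe_singleton, Submodule.mem_span_singleton]
    exact ⟨MulOpposite.op q, by simp⟩⟩⟩
  have hinj : Function.Injective L := by
    rw [injective_iff_map_eq_zero]
    intro x hx
    exact hM x fun i => congrFun hx i
  have hs : Function.Surjective L := LinearMap.injective_iff_surjective.1 hinj
  choose N hN using fun k : Fin n => hs (fun i => if i = k then 1 else 0)
  exact ⟨fun j k => N k j, fun i k => congrFun (hN k) i⟩

theorem hx_regularQ {F H B Q : Type} [Field F] [Ring H] [HopfAlgebra F H] [Ring B] [Algebra F B]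
    [IsDomain B] (ha : HopfAction F H B) [DivisionRing Q] [Algebra F Q]
    (ι : B →ₐ[F] Q) (hinj : Function.Injective ι)
    (hfrac : ∀ q : Q, ∃ a b : B, b ≠ 0 ∧ q = ι a * (ι b)⁻¹) {n : ℕ} (a : Fin n → Fin n → H)
    (hΔ : ∀ i j, Coalgebra.comul (R := F) (a i j) = ∑ k, a i k ⊗ₜ[F] a k j)
    (hε : ∀ i j, Coalgebra.counit (R := F) (a i j) = if i = j then 1 else 0)
    (z : B) (hz : z ≠ 0) (x : Fin n → Q) (hx : ∀ i, ∑ j, ι (ha.act (a i j) z) * x j = 0) :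
    x = 0 := by
  obtain ⟨b, hb, hy⟩ := hx_denom (ι : B →+* Q) hinj hfrac Finset.univ x
  choose y hy using fun j => hy j (Finset.mem_univ j)
  have h0 : y = 0 := by
    refine hx_regular ha a hΔ hε z hz y fun i => hinj ?_
    have := congrArg (· * ι b) (hx i)
    simp only [Finset.sum_mul, mul_assoc, zero_mul] at this
    rw [map_zero, ← this, map_sum]
    refine Finset.sum_congr rfl fun j _ => ?_
    have h := hy j
    simp only [RingHom.coe_coe] at h
    rw [h, map_mul]
  funext j
  have h := hy j
  simp only [h0, RingHom.coe_coe, Pi.zero_apply, map_zero] at h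
  exact (mul_eq_zero.1 h).resolve_right ((map_ne_zero_iff ι hinj).2 hb)

open WithConv in
/-- the map `B → Hom(H, Q)` -/
noncomputable def hxRho {F H B Q : Type} [Field F] [Ring H] [HopfAlgebra F H] [Ring B] [Algebra F B]
    (ha : HopfAction F H B) [DivisionRing Q] [Algebra F Q] (ι : B →ₐ[F] Q) :
    B →ₐ[F] WithConv (H →ₗ[F] Q) :=
  AlgHom.ofLinearMap
    ({ toFun := fun z => toConv (ι.toLinearMap ∘ₗ ha.act.flip z)
       map_add' := by intro x y; ext h; simp
       map_smul' := by intro x y; ext h; simp } : B →ₗ[F] WithConv (H →ₗ[F] Q))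
    (by ext h; simp [ha.act_one])
    (by
      intro x y; ext h
      simp only [LinearMap.coe_mk, AddHom.coe_mk, LinearMap.convMul_apply, LinearMap.comp_apply,
        LinearMap.flip_apply, ha.act_mul, ofConv_toConv]
      generalize Coalgebra.comul (R := F) h = t
      induction t with
      | zero => simp
      | add p q hp hq => simp only [map_add, hp, hq]
      | tmul p q => simp)

theorem hxRho_apply {F H B Q : Type} [Field F] [Ring H] [HopfAlgebra F H] [Ring B] [Algebra F B]
    (ha : HopfAction F H B) [DivisionRing Q] [Algebra F Q] (ι : B →ₐ[F] Q) (z : B) (h : H) :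
    (hxRho ha ι z).ofConv h = ι (ha.act h z) := rfl

theorem hx_leftreg {F H B Q : Type} [Field F] [Ring H] [HopfAlgebra F H] [Ring B] [Algebra F B]
    [IsDomain B] (ha : HopfAction F H B) [DivisionRing Q] [Algebra F Q]
    (ι : B →ₐ[F] Q) (hinj : Function.Injective ι)
    (hfrac : ∀ q : Q, ∃ a b : B, b ≠ 0 ∧ q = ι a * (ι b)⁻¹)
    (z : B) (hz : z ≠ 0) (f : WithConv (H →ₗ[F] Q)) (hf : hxRho ha ι z * f = 0) : f = 0 := by
  ext h
  obtain ⟨n, w, a, _, h2, h3, h4, h5⟩ := hx_comatrix (F := F) {h}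
  have h0 := hx_regularQ ha ι hinj hfrac a h4 h5 z hz (fun j => f.ofConv (w j)) (by
    intro i
    have := LinearMap.congr_fun (congrArg WithConv.ofConv hf) (w i)
    rw [LinearMap.convMul_apply, h3] at this
    simpa [hxRho_apply] using this)
  have : Submodule.span F (Set.range w) ≤ LinearMap.ker f.ofConv := by
    rw [Submodule.span_le]
    rintro _ ⟨j, rfl⟩
    exact congrFun h0 j
  exact this (h2 h (by simp))

theorem hx_rightinv {F H B Q : Type} [Field F] [Ring H] [HopfAlgebra F H] [Ring B] [Algebra F B]
    [IsDomain B] (ha : HopfAction F H B) [DivisionRing Q] [Algebra F Q]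
    (ι : B →ₐ[F] Q) (hinj : Function.Injective ι)
    (hfrac : ∀ q : Q, ∃ a b : B, b ≠ 0 ∧ q = ι a * (ι b)⁻¹)
    (z : B) (hz : z ≠ 0) : ∃ u : WithConv (H →ₗ[F] Q), hxRho ha ι z * u = 1 := by
  classical
  -- T (q ⊗ h) = q (h₁ z) ⊗ h₂
  let T0 : H →ₗ[F] Q ⊗[F] H := (hxRho ha ι z).ofConv.rTensor H ∘ₗ Coalgebra.comul
  let T : Q ⊗[F] H →ₗ[Q] Q ⊗[F] H := TensorProduct.AlgebraTensorModule.lift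
    ({ toFun := fun q => 
        { toFun := fun h => q • T0 h
          map_add' := by intro x y; simp
          map_smul' := by intro x y; rw [map_smul, smul_comm]; rfl }
       map_add' := by intro x y; ext h; simp [add_smul]
       map_smul' := by intro x y; ext h; simp [mul_smul] } : Q →ₗ[Q] H →ₗ[F] Q ⊗[F] H)
  have hT : ∀ q h, T (q ⊗ₜ h) = q • T0 h := fun q h => rfl
  have hTinj : Function.Injective T := by
    rw [injective_iff_map_eq_zero]
    intro x hx
    obtain ⟨s, hs⟩ := TensorProduct.exists_finset x
    obtain ⟨n, w, a, h1, h2, h3, h4, h5⟩ := hx_comatrix (F := F) (s.image Prod.snd)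
    have hx2 : ∃ q : Fin n → Q, x = ∑ i, q i ⊗ₜ w i := by
      have : x ∈ LinearMap.range (Fintype.linearCombination Q (fun i => (1:Q) ⊗ₜ[F] w i)) := by
        rw [hs]
        refine Submodule.sum_mem _ fun p hp => ?_
        obtain ⟨c, hc⟩ := (Submodule.mem_span_range_iff_exists_fun F).1
          (h2 p.2 (Finset.mem_image_of_mem _ hp))
        refine ⟨fun i => c i • p.1, ?_⟩
        rw [← hc, TensorProduct.tmul_sum, Fintype.linearCombination_apply]
        refine Finset.sum_congr rfl fun i _ => ?_
        rw [TensorProduct.smul_tmul', smul_eq_mul, mul_one, TensorProduct.smul_tmul]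
      obtain ⟨q, hq⟩ := this
      refine ⟨q, ?_⟩
      rw [← hq, Fintype.linearCombination_apply]
      simp [TensorProduct.smul_tmul']
    obtain ⟨q, rfl⟩ := hx2
    obtain ⟨N, hN⟩ := hx_surj (fun i j => ι (ha.act (a i j) z))
      (fun x hx => hx_regularQ ha ι hinj hfrac a h4 h5 z hz x hx)
    have hd : ∀ j, ∃ φ : H →ₗ[F] F, ∀ i, φ (w i) = if i = j then 1 else 0 := by
      intro j
      obtain ⟨φ, hφ⟩ := LinearMap.exists_extend ((Module.Basis.span h1).coord j)
      refine ⟨φ, fun i => ?_⟩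
      have := LinearMap.congr_fun hφ (Module.Basis.span h1 i)
      rw [LinearMap.comp_apply, Submodule.subtype_apply,
        Module.Basis.coord_apply, Module.Basis.repr_self, Finsupp.single_apply,
        Module.Basis.span_apply] at this
      exact this
    choose φ hφ using hd
    have hq : ∀ j, ∑ i, q i * ι (ha.act (a i j) z) = 0 := by
      intro j
      have := congrArg (TensorProduct.rid F Q) (congrArg ((φ j).lTensor Q) hx)
      simpa [hT, T0, h3, hφ, hxRho_apply, TensorProduct.smul_tmul', Finset.smul_sum] using this
    have hq0 : ∀ k, q k = 0 := by
      intro k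
      have : ∑ j, (∑ i, q i * ι (ha.act (a i j) z)) * N j k = q k := by
        simp only [Finset.sum_mul, mul_assoc]
        rw [Finset.sum_comm]
        simp only [← Finset.mul_sum, hN]
        simp
      rw [← this]; simp [hq]
    simp [hq0]
  obtain ⟨g, hg⟩ := LinearMap.exists_leftInverse_of_injective T (LinearMap.ker_eq_bot.2 hTinj)
  let E : Q ⊗[F] H →ₗ[F] Q := (TensorProduct.rid F Q).toLinearMap ∘ₗ (Coalgebra.counit (R := F) (A := H)).lTensor Q
  have hE : ∀ (c : Q) (t : Q ⊗[F] H), E (c • t) = c * E t := by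
    intro c t
    induction t with
    | zero => simp
    | add p q hp hq => simp only [smul_add, map_add, hp, hq, mul_add]
    | tmul p q => simp [E, TensorProduct.smul_tmul']
  refine ⟨WithConv.toConv (E ∘ₗ (g.restrictScalars F) ∘ₗ TensorProduct.mk F Q H 1), ?_⟩
  ext h
  have h1 := LinearMap.congr_fun hg (1 ⊗ₜ h)
  rw [LinearMap.comp_apply, hT, one_smul] at h1
  have h2 := congrArg E h1
  have h3 : E (LinearMap.id (R := Q) ((1:Q) ⊗ₜ[F] h)) = algebraMap F Q (Coalgebra.counit (R := F) h) := by
    simp [E, Algebra.smul_def]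
  rw [h3] at h2
  rw [LinearMap.convMul_apply, LinearMap.convOne_apply, ← h2]
  simp only [T0, LinearMap.comp_apply]
  generalize Coalgebra.comul (R := F) h = t
  induction t with
  | zero => simp
  | add p q hp hq => simp only [map_add, hp, hq]
  | tmul p q =>
    have : (hxRho ha ι z).ofConv p ⊗ₜ[F] q = (hxRho ha ι z).ofConv p • ((1 : Q) ⊗ₜ[F] q) := by
      rw [TensorProduct.smul_tmul', smul_eq_mul, mul_one]
    rw [LinearMap.rTensor_tmul, this, map_smul, hE]
    simp

theorem hx_unit {F H B Q : Type} [Field F] [Ring H] [HopfAlgebra F H] [Ring B] [Algebra F B]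
    [IsDomain B] (ha : HopfAction F H B) [DivisionRing Q] [Algebra F Q]
    (ι : B →ₐ[F] Q) (hinj : Function.Injective ι)
    (hfrac : ∀ q : Q, ∃ a b : B, b ≠ 0 ∧ q = ι a * (ι b)⁻¹)
    (z : B) (hz : z ≠ 0) : IsUnit (hxRho ha ι z) := by
  obtain ⟨u, hu⟩ := hx_rightinv ha ι hinj hfrac z hz
  refine ⟨⟨_, u, hu, ?_⟩, rfl⟩
  have := hx_leftreg ha ι hinj hfrac z hz (u * hxRho ha ι z - 1) (by
    rw [mul_sub, ← mul_assoc, hu, one_mul, mul_one, sub_self])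
  exact sub_eq_zero.1 this

theorem hx_ext {B Q R : Type} [Ring B] [DivisionRing Q] [IsDomain B] [Ring R]
    (ι : B →+* Q) (hinj : Function.Injective ι)
    (hfrac : ∀ q : Q, ∃ a b : B, b ≠ 0 ∧ q = ι a * (ι b)⁻¹)
    (ρ : B →+* R) (hρ : ∀ b, b ≠ 0 → IsUnit (ρ b)) :
    ∃ φ : Q →+* R, ∀ b, φ (ι b) = ρ b := by
  classical
  have hne : ∀ b : B, b ≠ 0 → ι b ≠ 0 := fun b hb => (map_ne_zero_iff ι hinj).2 hb
  have hfr : ∀ q : Q, ∃ a b : B, b ≠ 0 ∧ q * ι b = ι a := by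
    intro q
    obtain ⟨a, b, hb, h⟩ := hfrac q
    exact ⟨a, b, hb, by rw [h, mul_assoc, inv_mul_cancel₀ (hne b hb), mul_one]⟩
  have hφ : ∀ q : Q, ∃ r : R, ∀ a b : B, q * ι b = ι a → r * ρ b = ρ a := by
    intro q
    obtain ⟨a, b, hb, h⟩ := hfr q
    obtain ⟨u, hu⟩ := hρ b hb
    refine ⟨ρ a * ↑u⁻¹, ?_⟩
    have hr : (ρ a * ↑u⁻¹) * ρ b = ρ a := by rw [← hu]; simp
    generalize ρ a * ↑u⁻¹ = r at hr
    intro a' b' h'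
    obtain ⟨c, d, hd, hcd⟩ := hfr ((ι b)⁻¹ * ι b')
    have h1 : b' * d = b * c := hinj (by
      rw [map_mul, map_mul, ← hcd, mul_assoc, mul_inv_cancel_left₀ (hne b hb)])
    have h2 : a' * d = a * c := hinj (by
      rw [map_mul, map_mul, ← h', ← h, mul_assoc, mul_assoc, ← map_mul, ← map_mul, h1])
    refine (hρ d hd).mul_right_cancel ?_
    rw [mul_assoc, ← map_mul, h1, map_mul, ← mul_assoc, hr, ← map_mul, ← h2, map_mul]
  choose φ hφ using hφ
  refine ⟨{ toFun := φ, map_one' := ?_, map_mul' := ?_, map_zero' := ?_, map_add' := ?_ }, ?_⟩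
  · simpa using hφ 1 1 1 (by simp)
  · intro q q'
    obtain ⟨a', b', hb', h'⟩ := hfr q'
    obtain ⟨c, d, hd, hcd⟩ := hfr (q * ι a')
    refine (hρ (b' * d) (mul_ne_zero hb' hd)).mul_right_cancel ?_
    rw [hφ (q * q') c (b' * d) (by rw [map_mul, ← hcd, ← h']; simp only [mul_assoc])]
    rw [map_mul, mul_assoc, ← mul_assoc (φ q'), hφ q' a' b' h', ← map_mul, 
      hφ q c (a' * d) (by rw [map_mul, ← mul_assoc, hcd])]
  · simpa using hφ 0 0 1 (by simp)
  · intro q q'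
    obtain ⟨b, hb, h⟩ := hx_denom ι hinj hfrac Finset.univ (fun i : Bool => if i then q else q')
    obtain ⟨y, hy⟩ := h true (Finset.mem_univ _)
    obtain ⟨y', hy'⟩ := h false (Finset.mem_univ _)
    simp only [if_true, Bool.false_eq_true, if_false] at hy hy'
    refine (hρ b hb).mul_right_cancel ?_
    rw [add_mul, hφ q y b hy, hφ q' y' b hy', ← map_add,
      hφ (q + q') (y + y') b (by rw [add_mul, hy, hy', map_add])]
  · intro b
    simpa using hφ (ι b) b 1 (by simp)

theorem hx_uniq {B Q R : Type} [Ring B] [DivisionRing Q] [IsDomain B] [Ring R]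
    (ι : B →+* Q) (hinj : Function.Injective ι)
    (hfrac : ∀ q : Q, ∃ a b : B, b ≠ 0 ∧ q = ι a * (ι b)⁻¹)
    (φ ψ : Q →+* R) (h : ∀ b, φ (ι b) = ψ (ι b)) : φ = ψ := by
  ext q
  obtain ⟨a, b, hb, rfl⟩ := hfrac q
  have hne : ι b ≠ 0 := (map_ne_zero_iff ι hinj).2 hb
  have hu : IsUnit (φ (ι b)) := (IsUnit.mk0 _ hne).map φ
  refine hu.mul_right_cancel ?_
  conv_rhs => rw [h b]
  rw [← map_mul, ← map_mul, mul_assoc, inv_mul_cancel₀ hne, mul_one, h a]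

open WithConv in
theorem hx_psi1 {F H Q : Type} [Field F] [Ring H] [Bialgebra F H] [Ring Q] [Algebra F Q]
    (φ : Q →ₐ[F] WithConv (H →ₗ[F] Q)) :
    ∃ ψ : Q →+* WithConv (H ⊗[F] H →ₗ[F] Q), ∀ q g h,
      (ψ q).ofConv (g ⊗ₜ h) = (φ q).ofConv (g * h) := by
  refine ⟨{ toFun := fun q => toConv ((φ q).ofConv ∘ₗ LinearMap.mul' F H)
            map_one' := ?_, map_mul' := ?_, map_zero' := ?_, map_add' := ?_ }, fun _ _ _ => rfl⟩
  · apply WithConv.ext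
    refine TensorProduct.ext' fun g h => ?_
    rw [map_one]
    simp [LinearMap.convOne_apply, mul_comm]
  · intro q q'
    apply WithConv.ext
    refine TensorProduct.ext' fun g h => ?_
    rw [map_mul]
    simp only [LinearMap.convMul_apply, LinearMap.comp_apply, LinearMap.mul'_apply,
      Bialgebra.comul_mul, TensorProduct.comul_tmul]
    generalize Coalgebra.comul (R := F) g = s
    generalize Coalgebra.comul (R := F) h = t
    induction s with
    | zero => simp
    | add p q hp hq => simp only [map_add, hp, hq, add_mul, TensorProduct.add_tmul]
    | tmul p q => 
      induction t with
      | zero => simp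
      | add p q hp hq => simp only [map_add, hp, hq, mul_add, TensorProduct.tmul_add]
      | tmul p q => simp
  · rw [map_zero]; rfl
  · intro q q'; rw [map_add]; rfl

open WithConv in
theorem hx_psi2 {F H Q : Type} [Field F] [Ring H] [Bialgebra F H] [Ring Q] [Algebra F Q]
    (φ : Q →ₐ[F] WithConv (H →ₗ[F] Q)) :
    ∃ ψ : Q →+* WithConv (H ⊗[F] H →ₗ[F] Q), ∀ q g h,
      (ψ q).ofConv (g ⊗ₜ h) = (φ ((φ q).ofConv h)).ofConv g := by
  let A : Q →ₗ[F] H →ₗ[F] Q := (WithConv.linearEquiv F _).toLinearMap ∘ₗ φ.toLinearMap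
  have hA : ∀ q h, A q h = (φ q).ofConv h := fun _ _ => rfl
  let D : Q → (H ⊗[F] H →ₗ[F] Q) := fun q => TensorProduct.lift (A ∘ₗ A q).flip
  have hD : ∀ q g h, D q (g ⊗ₜ h) = (φ ((φ q).ofConv h)).ofConv g := fun _ _ _ => rfl
  refine ⟨{ toFun := fun q => toConv (D q)
            map_one' := ?_, map_mul' := ?_, map_zero' := ?_, map_add' := ?_ }, fun _ _ _ => rfl⟩
  · apply WithConv.ext
    refine TensorProduct.ext' fun g h => ?_
    rw [ofConv_toConv, hD, map_one, LinearMap.convOne_apply, AlgHom.commutes]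
    simp [LinearMap.convOne_apply, Algebra.smul_def]
  · intro q q'
    apply WithConv.ext
    refine TensorProduct.ext' fun g h => ?_
    rw [ofConv_toConv, hD, map_mul]
    simp only [LinearMap.convMul_apply, TensorProduct.comul_tmul]
    generalize Coalgebra.comul (R := F) h = t
    induction t with
    | zero => simp
    | add p q hp hq =>
      simp only [map_add, WithConv.ofConv_add, LinearMap.add_apply, hp, hq, TensorProduct.tmul_add]
    | tmul p p' =>
      simp only [TensorProduct.map_tmul, LinearMap.mul'_apply, map_mul, LinearMap.convMul_apply]
      generalize Coalgebra.comul (R := F) g = s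
      induction s with
      | zero => simp
      | add p q hp hq => simp only [map_add, hp, hq, TensorProduct.add_tmul]
      | tmul r r' => simp [hD]
  · apply WithConv.ext
    refine TensorProduct.ext' fun g h => ?_
    rw [ofConv_toConv, hD]; simp
  · intro q q'
    apply WithConv.ext
    refine TensorProduct.ext' fun g h => ?_
    rw [ofConv_toConv, hD]; simp [hD]

/-- Let `H` be a Hopf algebra over an algebraically closed field `F` and `B` a PI domain
over `F` with an inner faithful `H`-action.  Then the action extends to an inner faithful
action of `H` on the quotient division algebra `Q_B` of `B`. -/
theorem inner_faithful_action_extends_to_quotient_division_algebra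
    (F : Type) [Field F] [IsAlgClosed F]
    (H : Type) [Ring H] [HopfAlgebra F H]
    (B : Type) [Ring B] [Algebra F B] [IsDomain B] (hPI : IsPIAlgebra F B)
    (ha : HopfAction F H B) (hif : ha.InnerFaithful)
    (Q : Type) [DivisionRing Q] [Algebra F Q]
    (ι : B →ₐ[F] Q) (hinj : Function.Injective ι)
    (hfrac : ∀ q : Q, ∃ a b : B, b ≠ 0 ∧ q = ι a * (ι b)⁻¹) :
    ∃ haQ : HopfAction F H Q,
      (∀ (h : H) (b : B), haQ.act h (ι b) = ι (ha.act h b)) ∧ haQ.InnerFaithful := by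
  obtain ⟨φ0, hφ0⟩ := hx_ext (ι : B →+* Q) hinj hfrac
    (hxRho ha ι : B →+* WithConv (H →ₗ[F] Q)) (hx_unit ha ι hinj hfrac)
  let φ : Q →ₐ[F] WithConv (H →ₗ[F] Q) :=
    { φ0 with
      commutes' := by
        intro c
        have h := hφ0 (algebraMap F B c)
        simp only [RingHom.coe_coe, AlgHom.commutes] at h
        exact h }
  have hφ : ∀ b, φ (ι b) = hxRho ha ι b := hφ0
  obtain ⟨ψ1, hψ1⟩ := hx_psi1 φ
  obtain ⟨ψ2, hψ2⟩ := hx_psi2 φ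
  have hψ : ψ1 = ψ2 := by
    refine hx_uniq (ι : B →+* Q) hinj hfrac ψ1 ψ2 fun b => ?_
    apply WithConv.ext
    refine TensorProduct.ext' fun g h => ?_
    rw [RingHom.coe_coe, hψ1, hψ2, hφ, hxRho_apply, hxRho_apply, hφ, hxRho_apply, ha.mul_act]
  let ev : Q →+* Q :=
    { toFun := fun q => (φ q).ofConv 1
      map_one' := by rw [map_one φ]; simp [LinearMap.convOne_apply]
      map_mul' := by
        intro x y
        rw [map_mul, LinearMap.convMul_apply]
        simp [Algebra.TensorProduct.one_def]
      map_zero' := by simp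
      map_add' := by intro x y; simp }
  have hev : ev = RingHom.id Q := by
    refine hx_uniq (ι : B →+* Q) hinj hfrac _ _ fun b => ?_
    change (φ (ι b)).ofConv 1 = ι b
    rw [hφ, hxRho_apply, ha.one_act]
  let A : Q →ₗ[F] H →ₗ[F] Q := (WithConv.linearEquiv F _).toLinearMap ∘ₗ φ.toLinearMap
  have hA : ∀ q h, A q h = (φ q).ofConv h := fun _ _ => rfl
  refine ⟨{ act := A.flip, one_act := ?_, mul_act := ?_, act_one := ?_, act_mul := ?_ }, ?_, ?_⟩
  · intro q
    exact RingHom.congr_fun hev q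
  · intro g h q
    have := congrArg (fun ψ => (ψ q).ofConv (g ⊗ₜ[F] h)) hψ
    simp only [hψ1, hψ2] at this
    exact this
  · intro h
    rw [LinearMap.flip_apply, hA, map_one, LinearMap.convOne_apply]
  · intro h a b
    rw [LinearMap.flip_apply, hA, map_mul, LinearMap.convMul_apply]
    generalize Coalgebra.comul (R := F) h = t
    induction t with
    | zero => simp
    | add p q hp hq => simp only [map_add, hp, hq]
    | tmul p q => simp [hA]
  · intro h b
    rw [LinearMap.flip_apply, hA, hφ, hxRho_apply]
  · intro I hI hann
    refine hif I hI fun x hx b => hinj ?_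
    have := hann x hx (ι b)
    rw [LinearMap.flip_apply, hA, hφ, hxRho_apply] at this
    rw [this, map_zero]
end

section
/- Let F be an algebraically closed field of characteristic p > 0. The Weyl algebra A_n(F) is an Azumaya algebra of degree p^n over its center, and its center is the polynomial algebra F[x_1^p, ..., x_n^p, y_1^p, ..., y_n^p]. In particular, A_n(F) is a PI domain whose quotient division algebra has degree p^n. -/
open TensorProduct

/-- The defining relations of the `n`-th Weyl algebra: generators `xᵢ = .inl i`,
`yᵢ = .inr i`, relations `[xᵢ,xⱼ] = [yᵢ,yⱼ] = 0` and `[yᵢ,xⱼ] = δᵢⱼ`. -/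
inductive WeylRel (R : Type) [CommRing R] (n : ℕ) :
    FreeAlgebra R (Fin n ⊕ Fin n) → FreeAlgebra R (Fin n ⊕ Fin n) → Prop
  | xx (i j : Fin n) : WeylRel R n (FreeAlgebra.ι R (Sum.inl i) * FreeAlgebra.ι R (Sum.inl j))
      (FreeAlgebra.ι R (Sum.inl j) * FreeAlgebra.ι R (Sum.inl i))
  | yy (i j : Fin n) : WeylRel R n (FreeAlgebra.ι R (Sum.inr i) * FreeAlgebra.ι R (Sum.inr j))
      (FreeAlgebra.ι R (Sum.inr j) * FreeAlgebra.ι R (Sum.inr i))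
  | yx (i j : Fin n) : WeylRel R n (FreeAlgebra.ι R (Sum.inr i) * FreeAlgebra.ι R (Sum.inl j))
      (FreeAlgebra.ι R (Sum.inl j) * FreeAlgebra.ι R (Sum.inr i) + if i = j then 1 else 0)

/-- The `n`-th Weyl algebra `A_n(R)` over a commutative ring `R`. -/
def WeylAlgebra (R : Type) [CommRing R] (n : ℕ) : Type := RingQuot (WeylRel R n)

noncomputable instance (R : Type) [CommRing R] (n : ℕ) : Ring (WeylAlgebra R n) :=
  inferInstanceAs (Ring (RingQuot (WeylRel R n)))

noncomputable instance (S R : Type) [CommSemiring S] [CommRing R] [Algebra S R] (n : ℕ) :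
    Algebra S (WeylAlgebra R n) :=
  inferInstanceAs (Algebra S (RingQuot (WeylRel R n)))

namespace WeylAlgebra

/-- The generator `xᵢ` of the Weyl algebra. -/
noncomputable def X {R : Type} [CommRing R] {n : ℕ} (i : Fin n) : WeylAlgebra R n :=
  RingQuot.mkRingHom (WeylRel R n) (FreeAlgebra.ι R (Sum.inl i))

/-- The generator `yᵢ` of the Weyl algebra. -/
noncomputable def Y {R : Type} [CommRing R] {n : ℕ} (i : Fin n) : WeylAlgebra R n :=
  RingQuot.mkRingHom (WeylRel R n) (FreeAlgebra.ι R (Sum.inr i))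

end WeylAlgebra

set_option maxHeartbeats 1000000
set_option synthInstance.maxHeartbeats 400000

section Azumaya

variable (F W : Type) [Field F] [Ring W] [Algebra F W]

local notation "Z" => Subalgebra.center F W

/-- The multiplication endomorphism `x ↦ a x b` of `W`, as a `Z(W)`-linear map. -/
noncomputable def sandwich (a : W) (b : Wᵐᵒᵖ) : W →ₗ[Z] W where
  toFun x := a * x * b.unop
  map_add' x y := by noncomm_ring
  map_smul' z x := by
    have hz : ∀ w : W, w * (z : W) = (z : W) * w := Subalgebra.mem_center_iff.mp z.2
    simp only [Subalgebra.smul_def, smul_eq_mul, RingHom.id_apply]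
    rw [← mul_assoc, hz a]
    noncomm_ring

/-- The natural map `W ⊗[Z] Wᵒᵖ → End_Z(W)`, `a ⊗ b ↦ (x ↦ a x b)`, whose bijectivity
(together with finite generation and projectivity over `Z`) expresses that `W` is an
Azumaya algebra over its center `Z`. -/
noncomputable def azumayaMap : W ⊗[Z] Wᵐᵒᵖ →ₗ[Z] (W →ₗ[Z] W) :=
  TensorProduct.lift (LinearMap.mk₂ Z (sandwich F W)
    (fun a a' b => by ext x; simp [sandwich, add_mul])
    (fun z a b => by
      ext x
      simp [sandwich, Subalgebra.smul_def, smul_eq_mul, mul_assoc])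
    (fun a b b' => by ext x; simp [sandwich, mul_add])
    (fun z a b => by
      have hz : ∀ w : W, w * (z : W) = (z : W) * w := Subalgebra.mem_center_iff.mp z.2
      ext x
      show a * x * (z • b).unop = z • (a * x * b.unop)
      rw [MulOpposite.unop_smul, Subalgebra.smul_def, Subalgebra.smul_def, smul_eq_mul,
        smul_eq_mul, ← mul_assoc, hz (a * x)]
      noncomm_ring))

end Azumaya

set_option maxHeartbeats 1000000
set_option synthInstance.maxHeartbeats 400000
open TensorProduct

section Abstract

variable (F W : Type) [Field F] [Ring W] [Algebra F W]

/-- The algebra of sandwich operators. -/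
def sandAlg : Subalgebra F (Module.End F W) :=
  Algebra.adjoin F (Set.range (LinearMap.mulLeft F (A := W)) ∪ Set.range (LinearMap.mulRight F (A := W)))

variable {F W}

lemma mulLeft_mem_sandAlg (a : W) : LinearMap.mulLeft F a ∈ sandAlg F W :=
  Algebra.subset_adjoin (Or.inl ⟨a, rfl⟩)

lemma mulRight_mem_sandAlg (a : W) : LinearMap.mulRight F a ∈ sandAlg F W :=
  Algebra.subset_adjoin (Or.inr ⟨a, rfl⟩)

lemma azumayaMap_tmul (a : W) (b : Wᵐᵒᵖ) (x : W) :
    azumayaMap F W (a ⊗ₜ b) x = a * x * b.unop := rfl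

lemma azumayaMap_comp (s t : W ⊗[Subalgebra.center F W] Wᵐᵒᵖ) :
    ∃ u, ∀ x, azumayaMap F W u x = azumayaMap F W s (azumayaMap F W t x) := by
  induction s using TensorProduct.induction_on with
  | zero => exact ⟨0, fun x => by simp⟩
  | add s₁ s₂ h₁ h₂ =>
    obtain ⟨u₁, h₁⟩ := h₁
    obtain ⟨u₂, h₂⟩ := h₂
    exact ⟨u₁ + u₂, fun x => by simp [h₁, h₂]⟩
  | tmul a b =>
    induction t using TensorProduct.induction_on with
    | zero => exact ⟨0, fun x => by simp⟩
    | add s₁ s₂ h₁ h₂ =>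
      obtain ⟨u₁, h₁⟩ := h₁
      obtain ⟨u₂, h₂⟩ := h₂
      exact ⟨u₁ + u₂, fun x => by simp [h₁, h₂]⟩
    | tmul c d =>
      exact ⟨(a * c) ⊗ₜ (b * d), fun x => by simp [azumayaMap_tmul, mul_assoc]⟩

lemma sandAlg_lift {T : Module.End F W} (hT : T ∈ sandAlg F W) :
    ∃ t, ∀ x, azumayaMap F W t x = T x := by
  refine Algebra.adjoin_induction (p := fun T _ => ∃ t, ∀ x, azumayaMap F W t x = T x)
    ?_ ?_ ?_ ?_ hT
  · rintro _ (⟨a, rfl⟩ | ⟨a, rfl⟩)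
    · exact ⟨a ⊗ₜ 1, fun x => by simp [azumayaMap_tmul]⟩
    · exact ⟨1 ⊗ₜ (MulOpposite.op a), fun x => by simp [azumayaMap_tmul]⟩
  · intro r
    exact ⟨(algebraMap F W r) ⊗ₜ 1, fun x => by
      simp [azumayaMap_tmul, Algebra.smul_def]⟩
  · rintro S T _ _ ⟨s, hs⟩ ⟨t, ht⟩
    exact ⟨s + t, fun x => by simp [hs, ht]⟩
  · rintro S T _ _ ⟨s, hs⟩ ⟨t, ht⟩
    obtain ⟨u, hu⟩ := azumayaMap_comp s t
    exact ⟨u, fun x => by simp [hu, hs, ht]⟩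

lemma sandAlg_ext {Q : Type} [Ring Q] [Algebra F Q] (ι : W →ₐ[F] Q)
    {T : Module.End F W} (hT : T ∈ sandAlg F W) :
    ∃ T' : Q →ₗ[Subalgebra.center F Q] Q, ∀ x, T' (ι x) = ι (T x) := by
  refine Algebra.adjoin_induction (p := fun T _ =>
    ∃ T' : Q →ₗ[Subalgebra.center F Q] Q, ∀ x, T' (ι x) = ι (T x))
    ?_ ?_ ?_ ?_ hT
  · rintro _ (⟨a, rfl⟩ | ⟨a, rfl⟩)
    · exact ⟨sandwich F Q (ι a) 1, fun x => by simp [sandwich]⟩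
    · exact ⟨sandwich F Q 1 (MulOpposite.op (ι a)), fun x => by simp [sandwich]⟩
  · intro r
    exact ⟨sandwich F Q (algebraMap F Q r) 1, fun x => by
      simp [sandwich, Algebra.smul_def]⟩
  · rintro S T _ _ ⟨s, hs⟩ ⟨t, ht⟩
    exact ⟨s + t, fun x => by simp [hs, ht]⟩
  · rintro S T _ _ ⟨s, hs⟩ ⟨t, ht⟩
    exact ⟨s.comp t, fun x => by simp [hs, ht]⟩

variable {I : Type} [Fintype I] [DecidableEq I] (b : I → W)

lemma linInd_of_dual (hd : ∀ α, ∃ T ∈ sandAlg F W, ∀ β, T (b β) = if α = β then 1 else 0)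
    {Q : Type} [Ring Q] [Algebra F Q] [Nontrivial Q] (ι : W →ₐ[F] Q) :
    LinearIndependent (Subalgebra.center F Q) (fun i => ι (b i)) := by
  rw [Fintype.linearIndependent_iff]
  intro g hg α
  obtain ⟨T, hT, hTb⟩ := hd α
  obtain ⟨T', hT'⟩ := sandAlg_ext ι hT
  have := congrArg T' hg
  simp only [map_sum, map_smul, hT', hTb, map_zero] at this
  simp only [apply_ite ι, map_one, map_zero, smul_ite, smul_zero, Finset.sum_ite_eq, Finset.mem_univ, if_true] at this
  rw [Subalgebra.smul_def, smul_eq_mul, mul_one] at this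
  exact Subtype.ext this

/-- The basis. -/
noncomputable def dualBasisOf [Nontrivial W]
    (hd : ∀ α, ∃ T ∈ sandAlg F W, ∀ β, T (b β) = if α = β then 1 else 0)
    (hs : ⊤ ≤ Submodule.span (Subalgebra.center F W) (Set.range b)) :
    Module.Basis I (Subalgebra.center F W) W :=
  Module.Basis.mk (v := b) (linInd_of_dual b hd (AlgHom.id F W)) hs

lemma azumaya_bij [Nontrivial W]
    (hd : ∀ α, ∃ T ∈ sandAlg F W, ∀ β, T (b β) = if α = β then 1 else 0)
    (hs : ⊤ ≤ Submodule.span (Subalgebra.center F W) (Set.range b)) :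
    Function.Bijective (azumayaMap F W) := by
  let B := dualBasisOf b hd hs
  have hB : ∀ i, B i = b i := fun i => by
    simp only [B, dualBasisOf]
    exact Module.Basis.mk_apply _ _ i
  have hsurj : Function.Surjective (azumayaMap F W) := by
    intro L
    have hd' := hd
    choose T hT hTb using hd'
    choose t ht using fun α => sandAlg_lift ((sandAlg F W).mul_mem
      (mulLeft_mem_sandAlg (F := F) (L (b α))) (hT α))
    refine ⟨∑ α, t α, B.ext fun β => ?_⟩
    rw [hB, map_sum, LinearMap.sum_apply]
    simp [ht, hTb]
  let Bop : Module.Basis I (Subalgebra.center F W) Wᵐᵒᵖ :=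
    B.map (MulOpposite.opLinearEquiv (Subalgebra.center F W))
  let B1 := B.tensorProduct Bop
  let B2 := B.linearMap B
  let e := B1.equiv B2 (Equiv.refl _)
  have h2 : Module.Finite (Subalgebra.center F W) (W →ₗ[Subalgebra.center F W] W) :=
    Module.Finite.of_basis B2
  have h1 : Module.Finite (Subalgebra.center F W) (W ⊗[Subalgebra.center F W] Wᵐᵒᵖ) :=
    Module.Finite.of_basis B1
  have := OrzechProperty.injective_of_surjective_endomorphism
    (e.symm.toLinearMap ∘ₗ azumayaMap F W) (e.symm.surjective.comp hsurj)
  refine ⟨?_, hsurj⟩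
  exact Function.Injective.of_comp (f := e.symm) this

/-- The center acts as an algebra. -/
noncomputable abbrev centerAlg : Algebra (Subalgebra.center F W) W :=
  Algebra.ofModule
    (fun z x y => by simp [Subalgebra.smul_def, mul_assoc])
    (fun z x y => by
      have hz : ∀ w : W, w * (z : W) = (z : W) * w := Subalgebra.mem_center_iff.mp z.2
      simp only [Subalgebra.smul_def, smul_eq_mul]
      rw [← mul_assoc, hz x, mul_assoc])

lemma pi_of_basis [Nontrivial W] (B : Module.Basis I (Subalgebra.center F W) W) :
    IsPIAlgebra F W := by
  obtain ⟨N, hN⟩ : ∃ N, N = Fintype.card I + 1 := ⟨_, rfl⟩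
  let f : FreeAlgebra F (Fin N) := ∑ σ : Equiv.Perm (Fin N),
    Equiv.Perm.sign σ • (List.ofFn fun i => FreeAlgebra.ι F (σ i)).prod
  refine ⟨N, f, ?_, ?_⟩
  · intro h
    let Φ := FreeAlgebra.lift F (fun x => MonoidAlgebra.of F (FreeMonoid (Fin N)) (.of x))
    have key : ∀ σ : Equiv.Perm (Fin N), Φ (List.ofFn fun i => FreeAlgebra.ι F (σ i)).prod
        = MonoidAlgebra.single (FreeMonoid.ofList (List.ofFn σ)) 1 := by
      intro σ
      have aux : ∀ l : List (Fin N), Φ (l.map (FreeAlgebra.ι F)).prod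
          = MonoidAlgebra.single (FreeMonoid.ofList l) 1 := by
        intro l
        induction l with
        | nil => simp [MonoidAlgebra.one_def]
        | cons a l ih =>
          rw [List.map_cons, List.prod_cons, map_mul, ih]
          simp [Φ, MonoidAlgebra.single_mul_single]
      rw [← aux, List.map_ofFn]
      rfl
    have h1 := congrArg (fun u => (Φ u).coeff (FreeMonoid.ofList (List.ofFn (1 : Equiv.Perm (Fin N))))) h
    simp only [f, map_sum, map_zero, MonoidAlgebra.coeff_sum, MonoidAlgebra.coeff_zero,
      Finsupp.coe_finsetSum, Finset.sum_apply] at h1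
    rw [Finset.sum_eq_single 1] at h1
    · rw [Equiv.Perm.sign_one, one_smul, key, MonoidAlgebra.coeff_single,
        Finsupp.single_eq_same] at h1
      exact one_ne_zero h1
    · intro σ _ hσ
      have hne : FreeMonoid.ofList (List.ofFn σ) ≠ FreeMonoid.ofList (List.ofFn (1 : Equiv.Perm (Fin N))) := by
        intro h
        exact hσ (Equiv.ext (congrFun (List.ofFn_injective (FreeMonoid.ofList.injective h))))
      rcases Int.units_eq_one_or (Equiv.Perm.sign σ) with h | h <;>
        simp only [h, key, one_smul, Units.neg_smul, map_neg, MonoidAlgebra.coeff_neg,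
          Finsupp.neg_apply, MonoidAlgebra.coeff_single, Finsupp.single_eq_of_ne' hne, neg_zero]
    · simp
  · intro v
    let _ := centerAlg (F := F) (W := W)
    have h0 : MultilinearMap.alternatization
        (MultilinearMap.mkPiAlgebraFin (Subalgebra.center F W) N W) = 0 := by
      refine B.ext_alternating fun v hv => ?_
      have := Fintype.card_le_of_injective v hv
      simp [hN] at this
    have h1 := congrArg (fun u => u v) h0
    simp only [MultilinearMap.alternatization_apply, AlternatingMap.zero_apply] at h1
    simp only [f, map_sum]
    rw [← h1]
    refine Finset.sum_congr rfl fun σ _ => ?_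
    rcases Int.units_eq_one_or (Equiv.Perm.sign σ) with h | h <;>
    simp [h, List.map_ofFn, Function.comp_def, map_list_prod, MultilinearMap.mkPiAlgebraFin_apply]

lemma quot_finrank [IsDomain W]
    (hd : ∀ α, ∃ T ∈ sandAlg F W, ∀ β, T (b β) = if α = β then 1 else 0)
    (hs : ⊤ ≤ Submodule.span (Subalgebra.center F W) (Set.range b))
    (Q : Type) [DivisionRing Q] [Algebra F Q] (ι : W →ₐ[F] Q) (hι : Function.Injective ι)
    (hQ : ∀ q : Q, ∃ a b : W, b ≠ 0 ∧ q = ι a * (ι b)⁻¹) :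
    Module.finrank (Subalgebra.center F Q) Q = Fintype.card I := by
  have hfin : Module.Finite (Subalgebra.center F W) W :=
    Module.Finite.of_basis (dualBasisOf b hd hs)
  have hcen : ∀ z : Subalgebra.center F W, ι z ∈ Subalgebra.center F Q := by
    intro z
    have hz : ∀ w : W, Commute (ι w) (ι z) := fun w => by
      have := Subalgebra.mem_center_iff.mp z.2 w
      simpa [Commute, SemiconjBy] using congrArg ι this
    rw [Subalgebra.mem_center_iff]
    intro q
    obtain ⟨a, c, -, rfl⟩ := hQ q
    exact ((hz a).mul_left (hz c).inv_left₀).eq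
  have hspanW : ∀ w : W, ι w ∈ Submodule.span (Subalgebra.center F Q)
      (Set.range fun i => ι (b i)) := by
    intro w
    have hw := hs (x := w) trivial
    induction hw using Submodule.span_induction with
    | mem x hx => obtain ⟨i, rfl⟩ := hx; exact Submodule.subset_span ⟨i, rfl⟩
    | zero => simp
    | add x y _ _ hx hy => rw [map_add]; exact Submodule.add_mem _ hx hy
    | smul z x _ hx =>
      have : ι (z • x) = (⟨ι z, hcen z⟩ : Subalgebra.center F Q) • ι x := by
        simp [Subalgebra.smul_def]
      rw [this]
      exact Submodule.smul_mem _ _ hx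
  have hspan : ⊤ ≤ Submodule.span (Subalgebra.center F Q) (Set.range fun i => ι (b i)) := by
    rintro q -
    obtain ⟨a, c, hc, rfl⟩ := hQ q
    let _ := centerAlg (F := F) (W := W)
    have hint : IsIntegral (Subalgebra.center F W) c := Algebra.IsIntegral.isIntegral c
    have hc' : c ∈ nonZeroDivisors W := mem_nonZeroDivisors_of_ne_zero hc
    obtain ⟨f, hf0, hf⟩ := hint.isAlgebraic.exists_nonzero_coeff_and_aeval_eq_zero hc'
    obtain ⟨g, hg⟩ : ∃ g, f = Polynomial.X * g + Polynomial.C (f.coeff 0) :=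
      ⟨f.divX, (Polynomial.X_mul_divX_add f).symm⟩
    set z := f.coeff 0 with hz
    have hz0 : (z : W) ≠ 0 := by simpa using hf0
    have hcz : c * (- Polynomial.aeval c g) = z := by
      rw [hg] at hf
      simp only [map_add, map_mul, Polynomial.aeval_X, Polynomial.aeval_C] at hf
      rw [mul_neg, neg_eq_iff_add_eq_zero]
      have hzz : algebraMap (Subalgebra.center F W) W z = z := by
        rw [Algebra.algebraMap_eq_smul_one, Subalgebra.smul_def, smul_eq_mul, mul_one]
      rw [← hzz]
      exact hf
    set c' := - Polynomial.aeval c g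
    have hιz : ι z ≠ 0 := by simpa using fun h => hz0 (hι (by simpa using h))
    have hιc : ι c ≠ 0 := fun h => hc (hι (by simpa using h))
    have hιc2 : ι c * ι c' = ι z := by rw [← map_mul, hcz]
    have hinv : (ι z)⁻¹ ∈ Subalgebra.center F Q := by
      have := hcen z
      rw [Subalgebra.mem_center_iff] at this ⊢
      intro q
      exact (Commute.inv_right₀ (this q)).eq
    have : ι a * (ι c)⁻¹ = (⟨(ι z)⁻¹, hinv⟩ : Subalgebra.center F Q) • ι (a * c') := by
      rw [Subalgebra.smul_def, smul_eq_mul, ← Subalgebra.mem_center_iff.mp hinv, map_mul,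
        mul_assoc]
      congr 1
      rw [eq_mul_inv_iff_mul_eq₀ hιz, ← hιc2, inv_mul_cancel_left₀ hιc]
    rw [this]
    exact Submodule.smul_mem _ _ (hspanW _)
  exact Module.finrank_eq_card_basis (Module.Basis.mk (linInd_of_dual b hd ι) hspan)

end Abstract

set_option maxHeartbeats 1000000
set_option synthInstance.maxHeartbeats 400000
open TensorProduct

section Weyl
set_option linter.deprecated false
set_option linter.unusedSimpArgs false

open MvPolynomial

variable {F : Type} [Field F] {n : ℕ}

local notation "WW" => WeylAlgebra F n
local notation "PP" => MvPolynomial (Fin n ⊕ Fin n) F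

lemma weyl_xx (i j : Fin n) : (WeylAlgebra.X i : WW) * WeylAlgebra.X j = WeylAlgebra.X j * WeylAlgebra.X i := by
  have := RingQuot.mkRingHom_rel (WeylRel.xx (R := F) i j)
  simp only [map_mul] at this
  exact this

lemma weyl_yy (i j : Fin n) : (WeylAlgebra.Y i : WW) * WeylAlgebra.Y j = WeylAlgebra.Y j * WeylAlgebra.Y i := by
  have := RingQuot.mkRingHom_rel (WeylRel.yy (R := F) i j)
  simp only [map_mul] at this
  exact this

lemma weyl_yx (i j : Fin n) : (WeylAlgebra.Y i : WW) * WeylAlgebra.X j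
    = WeylAlgebra.X j * WeylAlgebra.Y i + if i = j then 1 else 0 := by
  have := RingQuot.mkRingHom_rel (WeylRel.yx (R := F) i j)
  simp only [map_mul, map_add, apply_ite (RingQuot.mkRingHom (WeylRel F n)), map_one, map_zero] at this
  exact this

/-- The quotient map. -/
noncomputable def weylMk : FreeAlgebra F (Fin n ⊕ Fin n) →ₐ[F] WW :=
  RingQuot.mkAlgHom F (WeylRel F n)

lemma weylMk_inl (i : Fin n) : weylMk (FreeAlgebra.ι F (Sum.inl i)) = (WeylAlgebra.X i : WW) := by
  unfold weylMk WeylAlgebra.X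
  rw [← RingQuot.mkAlgHom_coe F]; rfl

lemma weylMk_inr (i : Fin n) : weylMk (FreeAlgebra.ι F (Sum.inr i)) = (WeylAlgebra.Y i : WW) := by
  unfold weylMk WeylAlgebra.Y
  rw [← RingQuot.mkAlgHom_coe F]; rfl

lemma weylMk_surj : Function.Surjective (weylMk (F := F) (n := n)) :=
  RingQuot.mkAlgHom_surjective F (WeylRel F n)

lemma weyl_induct {C : WW → Prop} (h1 : C 1) (hadd : ∀ v w, C v → C w → C (v + w))
    (hsmul : ∀ (r : F) w, C w → C (r • w))
    (hX : ∀ i w, C w → C (WeylAlgebra.X i * w)) (hY : ∀ i w, C w → C (WeylAlgebra.Y i * w))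
    (w : WW) : C w := by
  obtain ⟨f, rfl⟩ := weylMk_surj w
  suffices h : ∀ v, C v → C (weylMk f * v) by simpa using h 1 h1
  induction f using FreeAlgebra.induction with
  | grade0 r => intro v hv; rw [AlgHom.commutes, ← Algebra.smul_def]; exact hsmul r v hv
  | grade1 x =>
    intro v hv
    rcases x with i | i
    · rw [weylMk_inl]; exact hX i v hv
    · rw [weylMk_inr]; exact hY i v hv
  | mul a b ha hb => intro v hv; rw [map_mul, mul_assoc]; exact ha _ (hb _ hv)
  | add a b ha hb => intro v hv; rw [map_add, add_mul]; exact hadd _ _ (ha _ hv) (hb _ hv)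

/-- Values on generators. -/
noncomputable def weylGen : Fin n ⊕ Fin n → Module.End F PP
  | Sum.inl i => LinearMap.mulLeft F (X (Sum.inl i))
  | Sum.inr i => LinearMap.mulLeft F (X (Sum.inr i)) + (pderiv (Sum.inl i)).toLinearMap

lemma pderiv_comm' (i j : Fin n ⊕ Fin n) (f : PP) :
    pderiv i (pderiv j f) = pderiv j (pderiv i f) := by
  have : ⁅pderiv (R := F) i, pderiv (R := F) j⁆ = 0 := by
    ext k
    classical
    simp [Derivation.commutator_apply, pderiv_X, Pi.single_apply, apply_ite]
  have := congrArg (fun D => D f) this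
  simpa [Derivation.commutator_apply, sub_eq_zero] using this

/-- The representation. -/
noncomputable def weylRep : WW →ₐ[F] Module.End F PP :=
  RingQuot.liftAlgHom F ⟨FreeAlgebra.lift F weylGen, by
    intro x y h
    classical
    induction h with
    | xx i j =>
      refine LinearMap.ext fun f => ?_
      simp [weylGen]; ring
    | yy i j =>
      refine LinearMap.ext fun f => ?_
      simp [weylGen, pderiv_comm' (Sum.inl i) (Sum.inl j), pderiv_mul]; ring
    | yx i j =>
      refine LinearMap.ext fun f => ?_
      split_ifs with hij
      · subst hij
        simp [weylGen, pderiv_mul]; ring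
      · simp [weylGen, pderiv_mul, Ne.symm hij, pderiv_X_of_ne]; ring⟩

lemma weylRep_mk (f) : weylRep (weylMk f : WW) = FreeAlgebra.lift F weylGen f :=
  RingQuot.liftAlgHom_mkAlgHom_apply F _ _ _

lemma weylRep_X (i : Fin n) (f : PP) : weylRep (WeylAlgebra.X i : WW) f = X (Sum.inl i) * f := by
  rw [← weylMk_inl, weylRep_mk]; simp [weylGen]

lemma weylRep_Y (i : Fin n) (f : PP) : weylRep (WeylAlgebra.Y i : WW) f
    = X (Sum.inr i) * f + pderiv (Sum.inl i) f := by
  rw [← weylMk_inr, weylRep_mk]; simp [weylGen]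

/-- The symbol map. -/
noncomputable def weylSym : WW →ₗ[F] PP where
  toFun w := weylRep w 1
  map_add' v w := by simp
  map_smul' r w := by simp

lemma weylSym_one : weylSym (1 : WW) = 1 := by simp [weylSym]

lemma weylSym_mul (v w : WW) : weylSym (v * w) = weylRep v (weylSym w) := by simp [weylSym]

lemma weylRep_right_Y (w : WW) (i : Fin n) (f : PP) :
    weylRep w (X (Sum.inr i) * f) = X (Sum.inr i) * weylRep w f := by
  induction w using weyl_induct with
  | h1 => simp
  | hadd v w hv hw => simp [hv, hw, mul_add]
  | hsmul r w hw => simp [hw]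
  | hX j w hw => simp only [map_mul, Module.End.mul_apply, weylRep_X, hw]; ring
  | hY j w hw =>
    simp only [map_mul, Module.End.mul_apply, weylRep_Y, hw, pderiv_mul]
    rw [pderiv_X_of_ne (by simp)]; ring

lemma weylRep_right_X (w : WW) (i : Fin n) (f : PP) :
    weylRep w (X (Sum.inl i) * f + pderiv (Sum.inr i) f)
      = X (Sum.inl i) * weylRep w f + pderiv (Sum.inr i) (weylRep w f) := by
  classical
  induction w using weyl_induct with
  | h1 => simp
  | hadd v w hv hw =>
    rw [map_add weylRep, LinearMap.add_apply, hv, hw, LinearMap.add_apply, map_add]; ring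
  | hsmul r w hw => simp only [map_smul, LinearMap.smul_apply, hw, smul_add, mul_smul_comm, Derivation.map_smul]
  | hX j w hw =>
    simp only [map_mul, Module.End.mul_apply, weylRep_X, hw, pderiv_mul]
    rw [pderiv_X_of_ne (by simp)]; ring
  | hY j w hw =>
    simp only [map_mul, Module.End.mul_apply, weylRep_Y, hw]
    simp only [pderiv_mul, map_add]
    rw [pderiv_comm' (Sum.inl j)]
    by_cases hij : i = j
    · subst hij; simp; ring
    · rw [pderiv_X_of_ne (by simpa using hij), pderiv_X_of_ne (by simpa using Ne.symm hij)]; ring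

lemma weylSym_X_mul (i : Fin n) (w : WW) :
    weylSym (WeylAlgebra.X i * w) = X (Sum.inl i) * weylSym w := by
  rw [weylSym_mul, weylRep_X]

lemma weylSym_Y_mul (i : Fin n) (w : WW) :
    weylSym (WeylAlgebra.Y i * w) = X (Sum.inr i) * weylSym w + pderiv (Sum.inl i) (weylSym w) := by
  rw [weylSym_mul, weylRep_Y]

lemma weylSym_mul_Y (i : Fin n) (w : WW) :
    weylSym (w * WeylAlgebra.Y i) = X (Sum.inr i) * weylSym w := by
  rw [weylSym_mul, ← mul_one (WeylAlgebra.Y i), weylSym_Y_mul, weylSym_one, pderiv_one, add_zero,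
    weylRep_right_Y]
  rfl

lemma weylSym_mul_X (i : Fin n) (w : WW) :
    weylSym (w * WeylAlgebra.X i) = X (Sum.inl i) * weylSym w + pderiv (Sum.inr i) (weylSym w) := by
  have := weylRep_right_X w i 1
  rw [pderiv_one, add_zero] at this
  rw [weylSym_mul, ← mul_one (WeylAlgebra.X i), weylSym_X_mul, weylSym_one, this]
  rfl

/-- Commuting operators on the Weyl algebra. -/
noncomputable def weylOp : Fin n ⊕ Fin n → Module.End F WW
  | Sum.inl i => LinearMap.mulLeft F (WeylAlgebra.X i)
  | Sum.inr i => LinearMap.mulRight F (WeylAlgebra.Y i)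

lemma weylOp_comm : ∀ a ∈ Set.range (weylOp (F := F) (n := n)),
    ∀ b ∈ Set.range (weylOp (F := F) (n := n)), a * b = b * a := by
  rintro _ ⟨i, rfl⟩ _ ⟨j, rfl⟩
  refine LinearMap.ext fun w => ?_
  rcases i with i | i <;> rcases j with j | j <;> simp [weylOp, mul_assoc]
  · rw [← mul_assoc, ← mul_assoc, weyl_xx]
  · rw [weyl_yy]

/-- The polynomial action on the Weyl algebra. -/
lemma weylAct_exists : ∃ Θ : PP →ₐ[F] Module.End F WW, ∀ i, Θ (X i) = weylOp i := by
  let _ := Algebra.adjoinCommRingOfComm F (weylOp_comm (F := F) (n := n))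
  let Θ : PP →ₐ[F] Algebra.adjoin F (Set.range (weylOp (F := F) (n := n))) :=
    aeval (fun i => ⟨weylOp i, Algebra.subset_adjoin ⟨i, rfl⟩⟩)
  refine ⟨(Subalgebra.val _).comp Θ, fun i => ?_⟩
  simp [Θ]

/-- The quantization map. -/
lemma weylQ_exists : ∃ ψ : PP →ₗ[F] WW, ψ 1 = 1 ∧
    (∀ i f, ψ (X (Sum.inl i) * f) = WeylAlgebra.X i * ψ f) ∧
    (∀ i f, ψ (X (Sum.inr i) * f) = ψ f * WeylAlgebra.Y i) := by
  obtain ⟨Θ, hΘ⟩ := weylAct_exists (F := F) (n := n)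
  refine ⟨(LinearMap.applyₗ (1 : WW)) ∘ₗ Θ.toLinearMap, ?_, ?_, ?_⟩
  · simp
  · intro i f; simp [hΘ, weylOp]
  · intro i f; simp [hΘ, weylOp]

lemma weylSym_bij : Function.Bijective (weylSym (F := F) (n := n)) := by
  obtain ⟨ψ, h1, hx, hy⟩ := weylQ_exists (F := F) (n := n)
  have hD : ∀ i f, WeylAlgebra.Y i * ψ f = ψ f * WeylAlgebra.Y i + ψ (pderiv (Sum.inl i) f) := by
    intro i f
    induction f using MvPolynomial.induction_on with
    | C a =>
      have : (C a : PP) = a • 1 := by rw [smul_eq_C_mul, mul_one]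
      rw [pderiv_C, this, map_smul, h1]; simp
    | add f g hf hg => simp only [map_add, mul_add, add_mul, hf, hg]; abel
    | mul_X f j hf =>
      rw [mul_comm f, pderiv_mul, map_add]
      rcases j with j | j
      · rw [hx, hx, ← mul_assoc, weyl_yx, add_mul, mul_assoc, hf]
        by_cases hij : i = j
        · subst hij; simp [mul_add, mul_assoc]; abel
        · rw [pderiv_X_of_ne (by simpa using Ne.symm hij)]; simp [hij, mul_add, mul_assoc]
      · rw [pderiv_X_of_ne (by simp), hy, hy, ← mul_assoc, hf, add_mul, mul_assoc, weyl_yy i j]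
        simp [mul_assoc]
  refine Function.bijective_iff_has_inverse.mpr ⟨ψ, ?_, ?_⟩
  · intro w
    induction w using weyl_induct with
    | h1 => rw [weylSym_one, h1]
    | hadd v w hv hw => rw [map_add, map_add, hv, hw]
    | hsmul r w hw => rw [map_smul, map_smul, hw]
    | hX i w hw => rw [weylSym_X_mul, hx, hw]
    | hY i w hw => rw [weylSym_Y_mul, map_add, hy, ← hD, hw]
  · intro f
    induction f using MvPolynomial.induction_on with
    | C a =>
      have : (C a : PP) = a • 1 := by rw [smul_eq_C_mul, mul_one]
      rw [this, map_smul, h1, map_smul, weylSym_one]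
    | add f g hf hg => simp only [map_add, hf, hg]
    | mul_X f j hf =>
      rw [mul_comm f]
      rcases j with j | j
      · rw [hx, weylSym_X_mul, hf]
      · rw [hy, weylSym_mul_Y, hf]

/-- The symbol map as an equivalence. -/
noncomputable def weylEquiv : WW ≃ₗ[F] PP := LinearEquiv.ofBijective weylSym weylSym_bij

lemma weylEquiv_apply (w : WW) : weylEquiv w = weylSym w := rfl

end Weyl

set_option maxHeartbeats 1000000
set_option synthInstance.maxHeartbeats 400000
open TensorProduct

section Weyl2
set_option linter.unusedSimpArgs false

open MvPolynomial

section Filt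
variable {F : Type} [Field F] {σ : Type}

/-- Polynomials of degree less than `k`. -/
noncomputable def ltDeg (F : Type) [Field F] (σ : Type) (k : ℕ) : Submodule F (MvPolynomial σ F) :=
  restrictSupport F {m | m.degree < k}

lemma ltDeg_mono {k l : ℕ} (h : k ≤ l) {f : MvPolynomial σ F} (hf : f ∈ ltDeg F σ k) :
    f ∈ ltDeg F σ l :=
  restrictSupport_mono _ (fun _ hm => lt_of_lt_of_le hm h) hf

lemma ltDeg_induct {k : ℕ} {S : Submodule F (MvPolynomial σ F)} {f : MvPolynomial σ F}
    (hf : f ∈ ltDeg F σ k) (L : MvPolynomial σ F →ₗ[F] MvPolynomial σ F)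
    (h : ∀ m : σ →₀ ℕ, m.degree < k → L (monomial m 1) ∈ S) : L f ∈ S := by
  rw [ltDeg, restrictSupport_eq_span] at hf
  have : Submodule.span F ((fun m => monomial m (1 : F)) '' {m : σ →₀ ℕ | m.degree < k}) ≤ S.comap L := by
    rw [Submodule.span_le]
    rintro _ ⟨m, hm, rfl⟩
    exact h m hm
  exact this hf

lemma monomial_mem_ltDeg {k : ℕ} {m : σ →₀ ℕ} (c : F) (h : m.degree < k) :
    monomial m c ∈ ltDeg F σ k := by
  rw [ltDeg, monomial_mem_restrictSupport]; exact Or.inl h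

lemma monomial_mul_ltDeg {k : ℕ} (m : σ →₀ ℕ) {f : MvPolynomial σ F}
    (hf : f ∈ ltDeg F σ k) : monomial m 1 * f ∈ ltDeg F σ (m.degree + k) := by
  refine ltDeg_induct hf (LinearMap.mulLeft F (monomial m 1)) fun m' hm' => ?_
  rw [LinearMap.mulLeft_apply, monomial_mul]
  exact monomial_mem_ltDeg _ (by rw [map_add]; omega)

lemma X_mul_ltDeg {k : ℕ} (i : σ) {f : MvPolynomial σ F}
    (hf : f ∈ ltDeg F σ k) : X i * f ∈ ltDeg F σ (k + 1) := by
  have := monomial_mul_ltDeg (Finsupp.single i 1) hf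
  rw [Finsupp.degree_single, add_comm] at this
  exact this

lemma pderiv_ltDeg {k : ℕ} (i : σ) {f : MvPolynomial σ F}
    (hf : f ∈ ltDeg F σ k) : pderiv i f ∈ ltDeg F σ k := by
  refine ltDeg_induct hf (pderiv i).toLinearMap fun m' hm' => ?_
  change pderiv i (monomial m' 1) ∈ _
  rw [pderiv_monomial]
  refine monomial_mem_ltDeg _ (lt_of_le_of_lt ?_ hm')
  exact Finsupp.degree_mono tsub_le_self

lemma mem_ltDeg_totalDegree (f : MvPolynomial σ F) : f ∈ ltDeg F σ (f.totalDegree + 1) := by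
  rw [ltDeg, mem_restrictSupport_iff]
  intro m hm
  exact Nat.lt_succ_of_le (le_totalDegree hm)

lemma not_mem_ltDeg_totalDegree {f : MvPolynomial σ F} (hf : f ≠ 0) :
    f ∉ ltDeg F σ f.totalDegree := by
  intro h
  rw [ltDeg, mem_restrictSupport_iff] at h
  obtain ⟨m, hm, hm'⟩ := Finset.exists_mem_eq_sup f.support (support_nonempty.mpr hf)
    (fun m => m.sum fun _ e => e)
  have := h hm
  exact absurd hm' (ne_of_gt this)

end Filt

variable {F : Type} [Field F] {n : ℕ}

local notation "WW" => WeylAlgebra F n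
local notation "PP" => MvPolynomial (Fin n ⊕ Fin n) F

lemma weylEquiv_symm_X (i : Fin n) (f : PP) :
    weylEquiv.symm (X (Sum.inl i) * f) = WeylAlgebra.X i * weylEquiv.symm f := by
  rw [LinearEquiv.symm_apply_eq, weylEquiv_apply, weylSym_X_mul, ← weylEquiv_apply,
    LinearEquiv.apply_symm_apply]

lemma weylEquiv_symm_Y (i : Fin n) (f : PP) :
    weylEquiv.symm (X (Sum.inr i) * f) = weylEquiv.symm f * WeylAlgebra.Y i := by
  rw [LinearEquiv.symm_apply_eq, weylEquiv_apply, weylSym_mul_Y, ← weylEquiv_apply,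
    LinearEquiv.apply_symm_apply]

lemma weylEquiv_symm_one : weylEquiv.symm (1 : PP) = 1 := by
  rw [LinearEquiv.symm_apply_eq, weylEquiv_apply, weylSym_one]

lemma star_monomial (k : ℕ) : ∀ (m : Fin n ⊕ Fin n →₀ ℕ), m.degree = k → ∀ (e : ℕ) (g : PP),
    g ∈ ltDeg F _ (e + 1) →
    weylRep (weylEquiv.symm (monomial m (1 : F))) g - monomial m 1 * g ∈ ltDeg F _ (k + e) := by
  induction k with
  | zero =>
    intro m hm e g hg
    have : m = 0 := (Finsupp.degree_eq_zero_iff m).mp hm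
    subst this
    have h1 : (monomial (0 : Fin n ⊕ Fin n →₀ ℕ) (1 : F)) = 1 := rfl
    rw [h1, weylEquiv_symm_one]
    simp
  | succ k ih =>
    intro m hm e g hg
    obtain ⟨i, hi⟩ : ∃ i, m i ≠ 0 := by
      by_contra! h
      have : m = 0 := Finsupp.ext h
      subst this
      simp at hm
    obtain ⟨m', rfl⟩ : ∃ m', m = Finsupp.single i 1 + m' :=
      ⟨m - Finsupp.single i 1, (add_tsub_cancel_of_le (by
        rw [Finsupp.single_le_iff]; omega)).symm⟩
    have hm' : m'.degree = k := by
      rw [map_add, Finsupp.degree_single] at hm; omega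
    have hmon : (monomial (Finsupp.single i 1 + m') (1 : F)) = X i * monomial m' 1 := by
      rw [X, monomial_mul, one_mul]
    rw [hmon]
    rcases i with i | i
    · rw [weylEquiv_symm_X, map_mul, Module.End.mul_apply, weylRep_X, mul_assoc, ← mul_sub]
      exact ltDeg_mono (by omega) (X_mul_ltDeg _ (ih m' hm' e g hg))
    · rw [weylEquiv_symm_Y, map_mul, Module.End.mul_apply, weylRep_Y, map_add]
      have h1 := ih m' hm' (e + 1) (X (Sum.inr i) * g) (X_mul_ltDeg _ hg)
      have hpg := pderiv_ltDeg (Sum.inl i) hg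
      have h2 := ih m' hm' e _ hpg
      have h3 := monomial_mul_ltDeg m' hpg
      have h4 := Submodule.add_mem _ (Submodule.add_mem _ h1
        (ltDeg_mono (l := k + (e + 1)) (by omega) h2)) (ltDeg_mono (l := k + (e + 1)) (by omega) h3)
      refine ltDeg_mono (k := k + (e + 1)) (by omega) ?_
      convert h4 using 1
      ring

lemma wstar_sub {d e : ℕ} {f g : PP} (hf : f ∈ ltDeg F _ (d + 1)) (hg : g ∈ ltDeg F _ (e + 1)) :
    weylRep (weylEquiv.symm f) g - f * g ∈ ltDeg F _ (d + e) := by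
  refine ltDeg_induct hf ((LinearMap.applyₗ g) ∘ₗ (weylRep (F := F) (n := n)).toLinearMap ∘ₗ
    (weylEquiv (F := F) (n := n)).symm.toLinearMap - LinearMap.mulRight F g) fun m hm => ?_
  exact ltDeg_mono (by omega) (star_monomial _ m rfl e g hg)

instance weyl_nontrivial : Nontrivial WW := (weylEquiv (F := F) (n := n)).toEquiv.nontrivial

lemma weyl_domain : IsDomain WW := by
  have : NoZeroDivisors WW := ⟨by
    intro a b hab
    by_contra! h
    have hf : weylSym a ≠ 0 := fun h0 => h.1 (weylSym_bij.1 (by rw [h0, map_zero]))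
    have hg : weylSym b ≠ 0 := fun h0 => h.2 (weylSym_bij.1 (by rw [h0, map_zero]))
    have key := wstar_sub (mem_ltDeg_totalDegree (weylSym a)) (mem_ltDeg_totalDegree (weylSym b))
    rw [← weylEquiv_apply, LinearEquiv.symm_apply_apply, ← weylSym_mul, hab, map_zero, zero_sub,
      Submodule.neg_mem_iff, weylEquiv_apply, ← totalDegree_mul_of_isDomain hf hg] at key
    exact not_mem_ltDeg_totalDegree (mul_ne_zero hf hg) key⟩
  exact NoZeroDivisors.to_isDomain _

lemma weyl_center_iff (w : WW) :
    w ∈ Subalgebra.center F WW ↔ ∀ i, pderiv i (weylSym w) = 0 := by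
  have hx : ∀ i, WeylAlgebra.X i * w = w * WeylAlgebra.X i ↔ pderiv (Sum.inr i) (weylSym w) = 0 := by
    intro i
    rw [← weylSym_bij.1.eq_iff, weylSym_X_mul, weylSym_mul_X, left_eq_add]
  have hy : ∀ i, WeylAlgebra.Y i * w = w * WeylAlgebra.Y i ↔ pderiv (Sum.inl i) (weylSym w) = 0 := by
    intro i
    rw [← weylSym_bij.1.eq_iff, weylSym_Y_mul, weylSym_mul_Y, add_eq_left]
  rw [Subalgebra.mem_center_iff]
  constructor
  · rintro h (i | i)
    · exact (hy i).1 (h _)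
    · exact (hx i).1 (h _)
  · intro h b
    induction b using weyl_induct with
    | h1 => simp
    | hadd v w hv hw => rw [add_mul, mul_add, hv, hw]
    | hsmul r w hw => rw [smul_mul_assoc, mul_smul_comm, hw]
    | hX i b hb => rw [mul_assoc, hb, ← mul_assoc, (hx i).2 (h _), mul_assoc]
    | hY i b hb => rw [mul_assoc, hb, ← mul_assoc, (hy i).2 (h _), mul_assoc]

variable (p : ℕ) [CharP F p]

lemma weylSym_X_pow_mul (k : ℕ) (i : Fin n) (w : WW) :
    weylSym (WeylAlgebra.X i ^ k * w) = X (Sum.inl i) ^ k * weylSym w := by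
  induction k with
  | zero => simp
  | succ k ih => rw [pow_succ', mul_assoc, weylSym_X_mul, ih]; ring

lemma weylSym_mul_Y_pow (k : ℕ) (i : Fin n) (w : WW) :
    weylSym (w * WeylAlgebra.Y i ^ k) = X (Sum.inr i) ^ k * weylSym w := by
  induction k with
  | zero => simp
  | succ k ih => rw [pow_succ, ← mul_assoc, weylSym_mul_Y, ih]; ring


end Weyl2

set_option maxHeartbeats 1000000
set_option synthInstance.maxHeartbeats 400000
open TensorProduct

section Weyl3
set_option linter.unusedSimpArgs false
set_option linter.unusedSectionVars false

open MvPolynomial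

variable {F : Type} [Field F] {n : ℕ} (p : ℕ) [CharP F p]

local notation "WW" => WeylAlgebra F n
local notation "PP" => MvPolynomial (Fin n ⊕ Fin n) F

lemma X_pow_center (i : Fin n) : (WeylAlgebra.X i : WW) ^ p ∈ Subalgebra.center F WW := by
  have hp0 : (p : PP) = 0 := CharP.cast_eq_zero _ p
  rw [weyl_center_iff]
  intro j
  rw [← mul_one (_ ^ p), weylSym_X_pow_mul, weylSym_one, mul_one, pderiv_pow, hp0, zero_mul,
    zero_mul]

lemma Y_pow_center (i : Fin n) : (WeylAlgebra.Y i : WW) ^ p ∈ Subalgebra.center F WW := by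
  have hp0 : (p : PP) = 0 := CharP.cast_eq_zero _ p
  rw [weyl_center_iff]
  intro j
  rw [← one_mul (_ ^ p), weylSym_mul_Y_pow, weylSym_one, mul_one, pderiv_pow, hp0, zero_mul,
    zero_mul]

/-- Central generators. -/
noncomputable def cenGen : Fin n ⊕ Fin n → Subalgebra.center F WW
  | Sum.inl i => ⟨WeylAlgebra.X i ^ p, X_pow_center p i⟩
  | Sum.inr i => ⟨WeylAlgebra.Y i ^ p, Y_pow_center p i⟩

/-- The map onto the center. -/
noncomputable def cenMap : PP →ₐ[F] Subalgebra.center F WW := aeval (cenGen p)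

lemma weylSym_cenMap_mul (f : PP) : ∀ w : WW,
    weylSym ((cenMap p f : WW) * w) = expand p f * weylSym w := by
  induction f using MvPolynomial.induction_on with
  | C a =>
    intro w
    have : ((cenMap p (C a : PP) : Subalgebra.center F WW) : WW) = algebraMap F WW a := by
      simp [cenMap]
    rw [this, ← Algebra.smul_def, map_smul, expand_C, smul_eq_C_mul]
  | add f g hf hg => intro w; simp only [map_add, AddMemClass.coe_add, add_mul, hf, hg]
  | mul_X f i hf =>
    intro w
    rw [map_mul (cenMap p), map_mul (expand p), MulMemClass.coe_mul, mul_assoc, hf, expand_X]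
    rcases i with i | i
    · have : ((cenMap p (X (Sum.inl i) : PP) : Subalgebra.center F WW) : WW)
          = WeylAlgebra.X i ^ p := by simp [cenMap, cenGen]
      rw [this, weylSym_X_pow_mul]; ring
    · have : ((cenMap p (X (Sum.inr i) : PP) : Subalgebra.center F WW) : WW)
          = WeylAlgebra.Y i ^ p := by simp [cenMap, cenGen]
      rw [this, ← Subalgebra.mem_center_iff.mp (Y_pow_center p i) w, weylSym_mul_Y_pow]; ring

lemma weylSym_cenMap (f : PP) : weylSym (cenMap p f : WW) = expand p f := by
  have := weylSym_cenMap_mul p f (1 : WW)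
  rwa [mul_one, weylSym_one, mul_one] at this

lemma exists_expand (hp : p.Prime) (f : PP) (hf : ∀ i, pderiv i f = 0) : ∃ g, expand p g = f := by
  have hdvd : ∀ m ∈ f.support, ∀ i, p ∣ m i := by
    intro m hm i
    by_contra hi
    have hi0 : m i ≠ 0 := fun h => hi (h ▸ dvd_zero p)
    have h1 := coeff_pderiv (i := i) f (m - Finsupp.single i 1)
    have h2 : m - Finsupp.single i 1 + Finsupp.single i 1 = m :=
      tsub_add_cancel_of_le (by rw [Finsupp.single_le_iff]; omega)
    rw [hf, coeff_zero, h2] at h1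
    have h3 : (((m - Finsupp.single i 1 : Fin n ⊕ Fin n →₀ ℕ) i : ℕ) : F) + 1 = (m i : F) := by
      rw [← Nat.cast_add_one]
      congr 1
      simp; omega
    rw [h3] at h1
    have h4 : (m i : F) ≠ 0 := by rwa [Ne, CharP.cast_eq_zero_iff F p]
    have h5 := mem_support_iff.mp hm
    rcases mul_eq_zero.mp h1.symm with h | h
    · exact h5 h
    · exact h4 h
  refine ⟨∑ m ∈ f.support, monomial (m.mapRange (· / p) (by simp)) (f.coeff m), ?_⟩
  rw [map_sum]
  conv_rhs => rw [f.as_sum]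
  refine Finset.sum_congr rfl fun m hm => ?_
  rw [expand_monomial]
  congr 2
  ext i
  simp [Nat.mul_div_cancel' (hdvd m hm i)]

lemma cenMap_bij (hp : p.Prime) : Function.Bijective (cenMap (F := F) (n := n) p) := by
  constructor
  · intro f g h
    refine expand_injective hp.pos ?_
    rw [← weylSym_cenMap, ← weylSym_cenMap, h]
  · intro z
    obtain ⟨g, hg⟩ := exists_expand p hp _ ((weyl_center_iff z.1).1 z.2)
    refine ⟨g, Subtype.ext (weylSym_bij.1 ?_)⟩
    rw [weylSym_cenMap, hg]

/-- Reduced exponents. -/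
noncomputable def redExp (α : Fin n ⊕ Fin n → Fin p) : Fin n ⊕ Fin n →₀ ℕ :=
  Finsupp.equivFunOnFinite.symm (fun i => (α i : ℕ))

lemma redExp_apply (α : Fin n ⊕ Fin n → Fin p) (i) : redExp p α i = α i := rfl

/-- The basis vectors. -/
noncomputable def weylBas (α : Fin n ⊕ Fin n → Fin p) : WW :=
  weylEquiv.symm (monomial (redExp p α) 1)

lemma weylSym_bas (α : Fin n ⊕ Fin n → Fin p) :
    weylSym (weylBas p α : WW) = monomial (redExp p α) 1 :=
  LinearEquiv.apply_symm_apply weylEquiv _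

lemma weylBas_span (hp : p.Prime) :
    ⊤ ≤ Submodule.span (Subalgebra.center F WW) (Set.range (weylBas (F := F) (n := n) p)) := by
  rintro w -
  obtain ⟨f, rfl⟩ := (weylEquiv (F := F) (n := n)).symm.surjective w
  induction f using MvPolynomial.induction_on' with
  | monomial m c =>
    let α : Fin n ⊕ Fin n → Fin p := fun i => ⟨m i % p, Nat.mod_lt _ hp.pos⟩
    have : weylEquiv.symm (monomial m c : PP)
        = cenMap p (monomial (m.mapRange (· / p) (by simp)) c : PP) • (weylBas p α : WW) := by
      rw [LinearEquiv.symm_apply_eq, weylEquiv_apply, Subalgebra.smul_def, smul_eq_mul,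
        weylSym_cenMap_mul, weylSym_bas, expand_monomial, monomial_mul, mul_one]
      congr 2
      ext i
      simp [redExp_apply, α, Nat.div_add_mod]
    rw [this]
    exact Submodule.smul_mem _ _ (Submodule.subset_span ⟨α, rfl⟩)
  | add f g hf hg => rw [map_add]; exact Submodule.add_mem _ hf hg

/-- Operators on polynomials coming from sandwich operators. -/
def InD (T : Module.End F PP) : Prop :=
  ∃ S ∈ sandAlg F WW, ∀ w, weylSym (S w) = T (weylSym w)

lemma InD.mul {S T : Module.End F PP} (hS : InD S) (hT : InD T) : InD (S * T) := by
  obtain ⟨S', hS', h1⟩ := hS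
  obtain ⟨T', hT', h2⟩ := hT
  exact ⟨S' * T', Subalgebra.mul_mem _ hS' hT', fun w => by simp [h1, h2]⟩

lemma InD.smul {T : Module.End F PP} (c : F) (hT : InD T) : InD (c • T) := by
  obtain ⟨T', hT', h2⟩ := hT
  exact ⟨c • T', Subalgebra.smul_mem _ hT' c, fun w => by simp [h2]⟩

lemma InD.one : InD (1 : Module.End F PP) := ⟨1, Subalgebra.one_mem _, fun w => by simp⟩

lemma InD.pow {T : Module.End F PP} (hT : InD T) (k : ℕ) : InD (T ^ k) := by
  induction k with
  | zero => exact InD.one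
  | succ k ih => rw [pow_succ]; exact ih.mul hT

lemma InD.mulX (i) : InD (LinearMap.mulLeft F (X i : PP)) := by
  rcases i with i | i
  · exact ⟨_, mulLeft_mem_sandAlg (WeylAlgebra.X i), fun w => by simp [weylSym_X_mul]⟩
  · exact ⟨_, mulRight_mem_sandAlg (WeylAlgebra.Y i), fun w => by simp [weylSym_mul_Y]⟩

lemma InD.pd (i) : InD ((pderiv i).toLinearMap : Module.End F PP) := by
  rcases i with i | i
  · exact ⟨_, Subalgebra.sub_mem _ (mulLeft_mem_sandAlg (WeylAlgebra.Y i))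
      (mulRight_mem_sandAlg (WeylAlgebra.Y i)), fun w => by simp [weylSym_Y_mul, weylSym_mul_Y]⟩
  · exact ⟨_, Subalgebra.sub_mem _ (mulRight_mem_sandAlg (WeylAlgebra.X i))
      (mulLeft_mem_sandAlg (WeylAlgebra.X i)), fun w => by simp [weylSym_X_mul, weylSym_mul_X]⟩

lemma pd_pow_monomial (i : Fin n ⊕ Fin n) (k : ℕ) (m : Fin n ⊕ Fin n →₀ ℕ) (c : F) :
    ((pderiv i).toLinearMap ^ k : Module.End F PP) (monomial m c)
      = monomial (m - Finsupp.single i k) (c * ((m i).descFactorial k : ℕ)) := by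
  induction k with
  | zero => simp
  | succ k ih =>
    rw [pow_succ', Module.End.mul_apply, ih]
    change pderiv i _ = _
    rw [pderiv_monomial, Nat.descFactorial_succ, tsub_tsub, ← Finsupp.single_add, mul_assoc]
    congr 2
    simp [mul_comm]

lemma mulX_pow_monomial (i : Fin n ⊕ Fin n) (k : ℕ) (m : Fin n ⊕ Fin n →₀ ℕ) (c : F) :
    (LinearMap.mulLeft F (X i : PP) ^ k : Module.End F PP) (monomial m c)
      = monomial (m + Finsupp.single i k) c := by
  induction k with
  | zero => simp
  | succ k ih =>
    rw [pow_succ', Module.End.mul_apply, ih, LinearMap.mulLeft_apply, X, monomial_mul, one_mul,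
      Finsupp.single_add]
    congr 2
    abel

lemma exists_one_var (hp : p.Prime) (i : Fin n ⊕ Fin n) (a : ℕ) (ha : a < p) :
    ∃ T : Module.End F PP, InD T ∧ ∀ m : Fin n ⊕ Fin n →₀ ℕ, m i < p →
      T (monomial m 1) = if m i = a then monomial (m.erase i) 1 else 0 := by
  have hfac : (((p - 1).factorial : ℕ) : F) ≠ 0 := by
    rw [Ne, CharP.cast_eq_zero_iff F p, hp.dvd_factorial]
    have := hp.pos
    omega
  refine ⟨(((p - 1).factorial : ℕ) : F)⁻¹ • ((pderiv i).toLinearMap ^ (p - 1) *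
    LinearMap.mulLeft F (X i : PP) ^ (p - 1 - a)),
    (((InD.pd i).pow _).mul ((InD.mulX i).pow _)).smul _, fun m hm => ?_⟩
  rw [LinearMap.smul_apply, Module.End.mul_apply, mulX_pow_monomial, pd_pow_monomial, one_mul,
    smul_monomial, smul_eq_mul, Finsupp.add_apply, Finsupp.single_eq_same]
  split_ifs with h
  · subst h
    have e1 : m i + (p - 1 - m i) = p - 1 := by omega
    rw [e1, Nat.descFactorial_self, inv_mul_cancel₀ hfac]
    congr 2
    ext j
    by_cases hj : j = i
    · subst hj; simp; omega
    · simp [Finsupp.single_apply, hj, Ne.symm hj]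
  · have hz : ((Nat.descFactorial (m i + (p - 1 - a)) (p - 1) : ℕ) : F) = 0 := by
      rcases lt_or_gt_of_ne h with h | h
      · rw [Nat.descFactorial_of_lt (by omega), Nat.cast_zero]
      · rw [CharP.cast_eq_zero_iff F p]
        have h1 := Nat.factorial_mul_descFactorial (n := m i + (p - 1 - a)) (k := p - 1) (by omega)
        have h2 : p ∣ (m i + (p - 1 - a)).factorial := (hp.dvd_factorial).2 (by omega)
        rw [← h1] at h2
        rcases hp.dvd_mul.1 h2 with h3 | h3
        · rw [hp.dvd_factorial] at h3; omega
        · exact h3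
    rw [hz, mul_zero, map_zero]

lemma exists_multi_var (hp : p.Prime) (α : Fin n ⊕ Fin n → Fin p) (s : Finset (Fin n ⊕ Fin n)) :
    ∃ T : Module.End F PP, InD T ∧ ∀ m : Fin n ⊕ Fin n →₀ ℕ, (∀ i, m i < p) →
      T (monomial m 1) = if ∀ i ∈ s, m i = α i then monomial (m.filter (· ∉ s)) 1 else 0 := by
  induction s using Finset.induction_on with
  | empty =>
    refine ⟨1, InD.one, fun m hm => ?_⟩
    rw [if_pos (by simp), Module.End.one_apply]
    congr 2
    ext j
    simp [Finsupp.filter_apply]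
  | insert i s hi ih =>
    obtain ⟨T, hT, hTm⟩ := ih
    obtain ⟨S, hS, hSm⟩ := exists_one_var (F := F) p hp i (α i) (α i).2
    refine ⟨S * T, hS.mul hT, fun m hm => ?_⟩
    rw [Module.End.mul_apply, hTm m hm]
    by_cases h : ∀ i ∈ s, m i = α i
    · have e1 : (m.filter (· ∉ s)) i = m i := by simp [hi]
      rw [if_pos h, hSm _ (by rw [e1]; exact hm i), e1]
      by_cases h' : m i = α i
      · rw [if_pos h', if_pos (by simpa [h'] using h)]
        congr 2
        ext j
        by_cases hj : j = i
        · subst hj; simp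
        · simp [Finsupp.filter_apply, hj]
      · rw [if_neg h', if_neg (fun hh => h' (hh i (Finset.mem_insert_self _ _)))]
    · rw [if_neg h, map_zero, if_neg (fun hh => h fun j hj => hh j (Finset.mem_insert_of_mem hj))]

lemma weyl_dual (hp : p.Prime) (α : Fin n ⊕ Fin n → Fin p) :
    ∃ T ∈ sandAlg F WW, ∀ β, T (weylBas p β) = if α = β then 1 else 0 := by
  obtain ⟨T, ⟨S, hS, hST⟩, hT⟩ := exists_multi_var (F := F) p hp α Finset.univ
  refine ⟨S, hS, fun β => weylSym_bij.1 ?_⟩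
  rw [hST, weylSym_bas, hT _ (fun i => (β i).2)]
  by_cases h : α = β
  · subst h
    rw [if_pos (show ∀ i ∈ Finset.univ, redExp p α i = α i from fun i _ => rfl), if_pos rfl, weylSym_one]
    have : (redExp p α).filter (· ∉ Finset.univ) = 0 := by ext; simp
    rw [this]; rfl
  · rw [if_neg h, if_neg, map_zero]
    intro hh
    exact h (funext fun i => Fin.ext (hh i (Finset.mem_univ _)).symm)

end Weyl3

theorem weyl_algebra_char_p_azumaya_over_polynomial_center
    (F : Type) [Field F] [IsAlgClosed F] (p : ℕ) (hp : p.Prime) [CharP F p] (n : ℕ) :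
    IsDomain (WeylAlgebra F n) ∧
    (∃ e : MvPolynomial (Fin n ⊕ Fin n) F ≃ₐ[F] Subalgebra.center F (WeylAlgebra F n),
      (∀ i : Fin n,
        (e (MvPolynomial.X (Sum.inl i)) : WeylAlgebra F n) = WeylAlgebra.X i ^ p) ∧
      (∀ i : Fin n,
        (e (MvPolynomial.X (Sum.inr i)) : WeylAlgebra F n) = WeylAlgebra.Y i ^ p)) ∧
    Module.Finite (Subalgebra.center F (WeylAlgebra F n)) (WeylAlgebra F n) ∧
    Module.Projective (Subalgebra.center F (WeylAlgebra F n)) (WeylAlgebra F n) ∧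
    Module.finrank (Subalgebra.center F (WeylAlgebra F n)) (WeylAlgebra F n) = (p ^ n) ^ 2 ∧
    Function.Bijective (azumayaMap F (WeylAlgebra F n)) ∧
    IsPIAlgebra F (WeylAlgebra F n) ∧
    (∀ (Q : Type) [DivisionRing Q] [Algebra F Q],
      ∀ ι : WeylAlgebra F n →ₐ[F] Q, Function.Injective ι →
        (∀ q : Q, ∃ a b : WeylAlgebra F n, b ≠ 0 ∧ q = ι a * (ι b)⁻¹) →
        Module.finrank (Subalgebra.center F Q) Q = (p ^ n) ^ 2) := by
  classical
  have hdom : IsDomain (WeylAlgebra F n) := weyl_domain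
  have hd := weyl_dual (F := F) (n := n) p hp
  have hs := weylBas_span (F := F) (n := n) p hp
  let B := dualBasisOf (weylBas (F := F) (n := n) p) hd hs
  have hcard : Fintype.card (Fin n ⊕ Fin n → Fin p) = (p ^ n) ^ 2 := by
    simp; ring
  refine ⟨hdom, ⟨AlgEquiv.ofBijective (cenMap p) (cenMap_bij p hp), ?_, ?_⟩,
    Module.Finite.of_basis B, Module.Projective.of_basis B, ?_, azumaya_bij _ hd hs,
    pi_of_basis B, ?_⟩
  · intro i; simp [cenMap, cenGen]
  · intro i; simp [cenMap, cenGen]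
  · rw [Module.finrank_eq_card_basis B, hcard]
  · intro Q _ _ ι hι hQ
    rw [← hcard]
    exact quot_finrank _ hd hs Q ι hι hQ
end
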